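/- arXiv:2402.02853 — 4 statements merged into one kernel-verified Lean document; each statement's English description precedes it below -/
import Mathlib

section
/- Let q ≥ 4 be a power of 2, let m ≥ 2 be an integer, n = q^m − 1, and let β be a primitive element of F_{q^m}. Then the cyclic code of length 2n over F_q with generator polynomial (x−1)^2 m_β(x) m_{β^2}(x) has dimension 2(q^m − 1) − 2m − 2 and minimum distance exactly 4; moreover, if qm > 8 then this code is distance-optimal. -/
open Polynomial

/-- The cyclic code of length `N` over the field `F` generated by the polynomial `g`.
Codewords are identified with the representatives of degree `< N` of the elements of the
ideal generated by `g` in `F[x]/(x^N - 1)`; equivalently, a polynomial `c` of degree `< N`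
is a codeword iff `c ∈ (g, x^N - 1)` as an ideal of `F[x]`. -/
noncomputable def cyclicCode (F : Type*) [Field F] (N : ℕ) (g : Polynomial F) :
    Submodule F (Polynomial F) :=
  Polynomial.degreeLT F N ⊓
    Submodule.restrictScalars F (Ideal.span ({g, Polynomial.X ^ N - 1} : Set (Polynomial F)))

/-- The minimum distance (equivalently, the minimum Hamming weight of a nonzero codeword,
a codeword being identified with its coefficient vector) of a linear code of polynomials. -/
noncomputable def minDist {F : Type*} [Field F] (C : Submodule F (Polynomial F)) : ℕ :=
  sInf {w | ∃ c ∈ C, c ≠ 0 ∧ c.support.card = w}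

/-- The minimum Hamming distance of an arbitrary (not necessarily linear) code
`D ⊆ F^N`. -/
noncomputable def setMinDist {F : Type*} {N : ℕ} (D : Set (Fin N → F)) : ℕ :=
  letI := Classical.decEq F
  sInf {w | ∃ u ∈ D, ∃ v ∈ D, u ≠ v ∧ hammingDist u v = w}


/-- A Vandermonde argument: three vanishing power sums and at most three distinct nodes. -/
theorem aux_vandermonde {K : Type*} [Field K] (S : Finset ℕ) (hS : S.card ≤ 3)
    (a x : ℕ → K) (hx : ∀ i ∈ S, ∀ j ∈ S, x i = x j → i = j)
    (h : ∀ k < 3, ∑ i ∈ S, a i * x i ^ k = 0) : ∀ i ∈ S, a i = 0 := by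
  classical
  intro i₀ hi₀
  set P : K[X] := ∏ j ∈ S.erase i₀, (X - C (x j)) with hP
  have hdeg : P.natDegree < 3 := by
    rw [hP, natDegree_prod_of_monic _ _ (fun j _ => monic_X_sub_C _)]
    simp only [natDegree_X_sub_C, Finset.sum_const, smul_eq_mul, mul_one]
    rw [Finset.card_erase_of_mem hi₀]
    omega
  have h1 : ∑ i ∈ S, a i * P.eval (x i) = 0 := by
    have : ∀ i ∈ S, a i * P.eval (x i) = ∑ k ∈ Finset.range 3, P.coeff k * (a i * x i ^ k) := by
      intro i _
      rw [eval_eq_sum_range' hdeg, Finset.mul_sum]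
      exact Finset.sum_congr rfl fun k _ => by ring
    rw [Finset.sum_congr rfl this, Finset.sum_comm]
    refine Finset.sum_eq_zero fun k hk => ?_
    rw [← Finset.mul_sum, h k (Finset.mem_range.1 hk), mul_zero]
  rw [Finset.sum_eq_single_of_mem i₀ hi₀] at h1
  · rcases mul_eq_zero.1 h1 with h1 | h1
    · exact h1
    · exfalso
      rw [hP, eval_prod, Finset.prod_eq_zero_iff] at h1
      obtain ⟨j, hj, hj2⟩ := h1
      simp only [eval_sub, eval_X, eval_C, sub_eq_zero] at hj2
      exact (Finset.mem_erase.1 hj).1 (hx i₀ hi₀ j (Finset.mem_erase.1 hj).2 hj2).symm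
  · intro i hi hne
    have : P.eval (x i) = 0 := by
      rw [hP, eval_prod]
      exact Finset.prod_eq_zero (Finset.mem_erase.2 ⟨hne, hi⟩) (by simp)
    rw [this, mul_zero]

theorem aux_finrank {F : Type*} [Field F] (N : ℕ) (g : F[X]) (hg : g ∣ X ^ N - 1)
    (hg0 : g ≠ 0) (hdN : g.natDegree ≤ N) :
    Module.finrank F (cyclicCode F N g) = N - g.natDegree := by
  have hinj : Function.Injective (LinearMap.mulLeft F g) := by
    intro a b hab
    exact mul_left_cancel₀ hg0 (by simpa using hab)
  have hmap : cyclicCode F N g =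
      Submodule.map (LinearMap.mulLeft F g) (degreeLT F (N - g.natDegree)) := by
    ext c
    have hspan : Ideal.span ({g, X ^ N - 1} : Set F[X]) = Ideal.span {g} := by
      rw [Ideal.span_insert]
      refine sup_eq_left.2 ?_
      rw [Ideal.span_singleton_le_span_singleton]
      exact hg
    simp only [cyclicCode, hspan, Submodule.mem_inf, Submodule.restrictScalars_mem,
      Ideal.mem_span_singleton, Submodule.mem_map, LinearMap.mulLeft_apply, mem_degreeLT]
    constructor
    · rintro ⟨hc, r, rfl⟩
      refine ⟨r, ?_, rfl⟩
      by_cases hr : r = 0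
      · subst hr; simp
      · rw [degree_eq_natDegree (mul_ne_zero hg0 hr), natDegree_mul hg0 hr] at hc
        rw [degree_eq_natDegree hr]
        have : g.natDegree + r.natDegree < N := by exact_mod_cast hc
        have : r.natDegree < N - g.natDegree := by omega
        exact_mod_cast this
    · rintro ⟨r, hr, rfl⟩
      refine ⟨?_, dvd_mul_right _ _⟩
      by_cases hr0 : r = 0
      · subst hr0; simp
      · rw [degree_eq_natDegree hr0] at hr
        rw [degree_eq_natDegree (mul_ne_zero hg0 hr0), natDegree_mul hg0 hr0]
        have : r.natDegree < N - g.natDegree := by exact_mod_cast hr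
        have : g.natDegree + r.natDegree < N := by omega
        exact_mod_cast this
  rw [hmap, ← (Submodule.equivMapOfInjective _ hinj _).finrank_eq,
    (degreeLTEquiv F (N - g.natDegree)).finrank_eq, Module.finrank_fin_fun]

theorem aux_mem {F : Type*} [Field F] (N : ℕ) (g : F[X]) (hg : g ∣ X ^ N - 1) (c : F[X]) :
    c ∈ cyclicCode F N g ↔ c.degree < N ∧ g ∣ c := by
  have hspan : Ideal.span ({g, X ^ N - 1} : Set F[X]) = Ideal.span {g} := by
    rw [Ideal.span_insert]
    refine sup_eq_left.2 ?_
    rw [Ideal.span_singleton_le_span_singleton]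
    exact hg
  simp only [cyclicCode, hspan, Submodule.mem_inf, Submodule.restrictScalars_mem,
      Ideal.mem_span_singleton, mem_degreeLT]

theorem aux_minpoly_deg {F K : Type*} [Field F] [Field K] [Finite K] [Algebra F K]
    [FiniteDimensional F K]
    (n : ℕ) (hn : Nat.card K = n + 1) (hn0 : 0 < n) (γ : K) (hγ : IsPrimitiveRoot γ n) :
    (minpoly F γ).natDegree = Module.finrank F K := by
  have : Fintype K := Fintype.ofFinite K
  rw [← IntermediateField.adjoin.finrank (Algebra.IsIntegral.isIntegral (R := F) γ)]
  have : IntermediateField.adjoin F {γ} = ⊤ := by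
    rw [eq_top_iff]
    intro x _
    by_cases hx : x = 0
    · rw [hx]; exact zero_mem _
    · have hx1 : x ^ n = 1 := by
        have := FiniteField.pow_card_sub_one_eq_one x hx
        rwa [← Nat.card_eq_fintype_card, hn, Nat.add_sub_cancel] at this
      have : NeZero n := ⟨hn0.ne'⟩
      obtain ⟨i, _, rfl⟩ := hγ.eq_pow_of_pow_eq_one hx1
      exact pow_mem (IntermediateField.mem_adjoin_simple_self F γ) i
  rw [this, IntermediateField.finrank_top']

/-- The conjugacy argument: `β` and `β ^ 2` are not conjugate over `F`. -/
theorem aux_minpoly_ne {F K : Type*} [Field F] [Fintype F] [Field K] [Fintype K] [Algebra F K]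
    (q m : ℕ) (hq4 : 4 ≤ q) (hm : 2 ≤ m) (hfin : Module.finrank F K = m)
    (β : K) (hβ : IsPrimitiveRoot β (q ^ m - 1)) :
    minpoly F β ≠ minpoly F (β ^ 2) := by
  intro h
  obtain ⟨σ, hσ⟩ := (Normal.minpoly_eq_iff_mem_orbit (F := F) K).1 h.symm
  have hcard : Nat.card (K ≃ₐ[F] K) = m := by rw [IsGalois.card_aut_eq_finrank, hfin]
  have hσ' : σ β = β ^ 2 := hσ
  have hpow : ∀ k : ℕ, (σ ^ k) β = β ^ 2 ^ k := by
    intro k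
    induction k with
    | zero => simp
    | succ k ih => rw [pow_succ', AlgEquiv.mul_apply, ih, map_pow, hσ', ← pow_mul, pow_succ']
  have h1 : σ ^ m = 1 := by rw [← hcard]; exact pow_card_eq_one'
  have h2 := hpow m
  rw [h1, AlgEquiv.one_apply] at h2
  have hlt : 2 ^ m < 4 ^ m := Nat.pow_lt_pow_left (by norm_num) (by omega)
  have hle : 4 ^ m ≤ q ^ m := Nat.pow_le_pow_left hq4 m
  have h3 : 2 ^ 2 ≤ 2 ^ m := Nat.pow_le_pow_right (by norm_num) hm
  have h4 : 4 ^ 2 ≤ 4 ^ m := Nat.pow_le_pow_right (by norm_num) hm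
  have h5 : (4:ℕ) ^ m = 2 ^ m * 2 ^ m := by rw [← mul_pow]; norm_num
  have h6 : 2 ^ m < q ^ m - 1 := by
    have : 2 ^ m * 4 ≤ 2 ^ m * 2 ^ m := Nat.mul_le_mul_left _ h3
    omega
  have := hβ.pow_inj (i := 1) (j := 2 ^ m) (by omega) h6 (by rw [pow_one]; exact h2)
  omega

/-- Sphere-packing bound for codes with minimum distance at least five. -/
theorem aux_packing {F : Type*} [Field F] [Fintype F] [DecidableEq F] (N : ℕ)
    (D : Set (Fin N → F))
    (hD : ∀ u ∈ D, ∀ v ∈ D, u ≠ v → 5 ≤ hammingDist u v) :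
    Nat.card D * ((N * (N - 1) / 2) * ((Fintype.card F - 1) * (Fintype.card F - 1))) ≤
      Fintype.card F ^ N := by
  classical
  let err : ((Σ j : Fin N, Fin j.1) × Fˣ × Fˣ) → (Fin N → F) := fun t =>
    Pi.single t.1.1 (t.2.1 : F) + Pi.single (⟨t.1.2.1, t.1.2.2.trans t.1.1.2⟩ : Fin N) (t.2.2 : F)
  have herr_eval : ∀ t k, err t k = if k.1 = t.1.1.1 then (t.2.1 : F) else
      if k.1 = t.1.2.1 then (t.2.2 : F) else 0 := by
    rintro ⟨⟨j, i⟩, a, b⟩ k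
    have := i.2
    simp only [err, Pi.add_apply, Pi.single_apply, Fin.ext_iff]
    split_ifs <;> first | omega | simp
  have hn_neg : ∀ x : Fin N → F, hammingNorm (-x) = hammingNorm x := by
    intro x
    simp [hammingNorm]
  have herr_norm : ∀ t, hammingNorm (err t) ≤ 2 := by
    intro t
    have hsub : (Finset.univ.filter fun k => err t k ≠ 0) ⊆
        {t.1.1, (⟨t.1.2.1, t.1.2.2.trans t.1.1.2⟩ : Fin N)} := by
      intro k hk
      rw [Finset.mem_filter, herr_eval] at hk
      simp only [Finset.mem_insert, Finset.mem_singleton, Fin.ext_iff]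
      by_contra hcon
      push Not at hcon
      exact hk.2 (by simp [hcon.1, hcon.2])
    exact (Finset.card_le_card hsub).trans Finset.card_le_two
  have herr_inj : Function.Injective err := by
    rintro ⟨⟨j, i⟩, a, b⟩ ⟨⟨j', i'⟩, a', b'⟩ h
    have hk : ∀ k : Fin N, _ := fun k => (herr_eval _ k).symm.trans ((congrFun h k).trans (herr_eval _ k))
    have hi := i.2
    have hi' := i'.2
    have ha := a.ne_zero
    have hb := b.ne_zero
    have ha' := a'.ne_zero
    have hb' := b'.ne_zero
    have k1 := hk j
    have k2 := hk j'
    have k3 := hk ⟨i.1, hi.trans j.2⟩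
    have k4 := hk ⟨i'.1, hi'.trans j'.2⟩
    simp only at k1 k2 k3 k4
    have hjj : j = j' := by
      rw [Fin.ext_iff]
      split_ifs at k1 k2 <;> first | omega | (exfalso; simp_all)
    subst hjj
    have hne : i.1 ≠ j.1 := by omega
    have hne' : i'.1 ≠ j.1 := by omega
    have hii : i = i' := by
      rw [Fin.ext_iff]
      simp only [hne, if_false] at k3
      by_contra hcon
      simp [hcon] at k3
    subst hii
    simp only [hne, if_true, if_false] at k1 k3
    rw [Units.ext k1, Units.ext k3]
  let f : D × ((Σ j : Fin N, Fin j.1) × Fˣ × Fˣ) → (Fin N → F) := fun p => p.1.1 + err p.2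
  have hf : Function.Injective f := by
    rintro ⟨u, t⟩ ⟨v, s⟩ h
    have h' : u.1 + err t = v.1 + err s := h
    have huv : u = v := by
      by_contra hne
      have h5 := hD u.1 u.2 v.1 v.2 (fun e => hne (Subtype.ext e))
      have e1 : hammingDist u.1 (u.1 + err t) = hammingNorm (err t) := by
        rw [hammingDist_comm, hammingDist_eq_hammingNorm, neg_add_eq_sub, sub_add_cancel_left, hn_neg]
      have e2 : hammingDist (v.1 + err s) v.1 = hammingNorm (err s) := by
        rw [hammingDist_eq_hammingNorm, neg_add_eq_sub, sub_add_cancel_left, hn_neg]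
      have htri := hammingDist_triangle u.1 (u.1 + err t) v.1
      rw [e1] at htri
      rw [h', e2] at htri
      have := herr_norm t
      have := herr_norm s
      omega
    subst huv
    rw [herr_inj (add_left_cancel h')]
  have hcard := Nat.card_le_card_of_injective f hf
  rw [Nat.card_prod, Nat.card_eq_fintype_card (α := (Σ j : Fin N, Fin j.1) × Fˣ × Fˣ),
    Fintype.card_prod, Fintype.card_prod, Fintype.card_sigma, Fintype.card_units,
    Nat.card_eq_fintype_card (α := Fin N → F), Fintype.card_fun, Fintype.card_fin] at hcard
  simp only [Fintype.card_fin] at hcard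
  rw [Fin.sum_univ_eq_sum_range (fun i => i) N, Finset.sum_range_id] at hcard
  exact hcard

theorem aux_weight {F K : Type*} [Field F] [Field K] [Algebra F K] [CharP F 2]
    (n : ℕ) (hodd : Odd n) (β : K) (hβ : IsPrimitiveRoot β n) (c : F[X])
    (hdeg : c.degree < (2 * n : ℕ))
    (h1 : (X - 1) ^ 2 ∣ c) (hβ1 : aeval β c = 0) (hβ2 : aeval (β ^ 2) c = 0)
    (hw : c.support.card ≤ 3) : c = 0 := by
  have e1 : c.eval 1 = 0 := by
    obtain ⟨r, rfl⟩ := h1; simp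
  have e2 : (derivative c).eval 1 = 0 := by
    obtain ⟨r, rfl⟩ := h1; simp [derivative_mul, derivative_pow]
  have s1 : ∑ i ∈ c.support, c.coeff i = 0 := by
    rw [eval_eq_sum, sum_def] at e1; simpa using e1
  have s2 : ∑ i ∈ c.support, c.coeff i * (i : F) = 0 := by
    rw [derivative_eval, sum_def] at e2; simpa using e2
  have hcast : ∀ i : ℕ, (i : F) = if Odd i then 1 else 0 := by
    intro i
    split_ifs with h
    · obtain ⟨k, rfl⟩ := h
      push_cast
      rw [CharTwo.two_eq_zero]; simp
    · rw [Nat.not_odd_iff_even] at h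
      obtain ⟨k, rfl⟩ := h
      push_cast
      exact CharTwo.add_self_eq_zero _
  have s3 : ∑ i ∈ c.support with Odd i, c.coeff i = 0 := by
    rw [Finset.sum_filter]
    refine Eq.trans ?_ s2
    exact Finset.sum_congr rfl fun i _ => by rw [hcast i]; simp
  have s4 : ∑ i ∈ c.support with ¬ Odd i, c.coeff i = 0 := by
    have := Finset.sum_filter_add_sum_filter_not c.support (fun i => Odd i) (fun i => c.coeff i)
    rw [s3, s1, zero_add] at this
    exact this
  have hne1 : ∀ p : ℕ → Prop, ∀ [DecidablePred p], ∑ i ∈ c.support with p i, c.coeff i = 0 →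
      (c.support.filter p).card ≠ 1 := by
    intro p _ hs hc
    obtain ⟨i, hi⟩ := Finset.card_eq_one.1 hc
    rw [hi, Finset.sum_singleton] at hs
    have : i ∈ c.support.filter p := by rw [hi]; simp
    exact (mem_support_iff.1 (Finset.mem_filter.1 this).1) hs
  have c1 : (c.support.filter fun i => Odd i).card ≠ 1 := hne1 _ s3
  have c2 : (c.support.filter fun i => ¬ Odd i).card ≠ 1 := hne1 _ s4
  have c3 := Finset.card_filter_add_card_filter_not (s := c.support) (fun i => Odd i)
  have hpar : ∀ i ∈ c.support, ∀ j ∈ c.support, (Odd i ↔ Odd j) := by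
    have h0 : (c.support.filter fun i => Odd i).card = 0 ∨
      (c.support.filter fun i => ¬ Odd i).card = 0 := by omega
    rcases h0 with h0 | h0 <;> rw [Finset.card_eq_zero, Finset.filter_eq_empty_iff] at h0 <;>
      intro i hi j hj <;> have := h0 hi <;> have := h0 hj <;> tauto
  have hlt : ∀ i ∈ c.support, i < 2 * n := by
    intro i hi
    by_contra hcon
    exact mem_support_iff.1 hi (coeff_eq_zero_of_degree_lt (hdeg.trans_le (by exact_mod_cast not_lt.1 hcon)))
  have hinj : ∀ i ∈ c.support, ∀ j ∈ c.support, β ^ i = β ^ j → i = j := by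
    intro i hi j hj hij
    have hmod : i ≡ j [MOD n] := by
      refine hβ.pow_inj (Nat.mod_lt _ hodd.pos) (Nat.mod_lt _ hodd.pos) ?_
      have hm : ∀ k, β ^ (k % n) = β ^ k := fun k => by
        conv_rhs => rw [← Nat.mod_add_div k n, pow_add, pow_mul, hβ.pow_eq_one, one_pow, mul_one]
      rw [hm, hm, hij]
    have hmod2 : i ≡ j [MOD 2] := by
      have := hpar i hi j hj
      rw [Nat.odd_iff, Nat.odd_iff] at this
      unfold Nat.ModEq
      omega
    have hco : Nat.Coprime 2 n := Nat.coprime_two_left.2 hodd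
    have := (Nat.modEq_and_modEq_iff_modEq_mul hco).1 ⟨hmod2, hmod⟩
    exact Nat.ModEq.eq_of_lt_of_lt this (hlt i hi) (hlt j hj)
  have hz := aux_vandermonde c.support hw (fun i => algebraMap F K (c.coeff i)) (fun i => β ^ i)
    hinj (by
      intro k hk
      interval_cases k
      · simp only [pow_zero, mul_one]
        rw [← map_sum, s1, map_zero]
      · rw [aeval_def, eval₂_eq_sum, sum_def] at hβ1
        simpa using hβ1
      · rw [aeval_def, eval₂_eq_sum, sum_def] at hβ2
        rw [← hβ2]
        exact Finset.sum_congr rfl fun i _ => by rw [← pow_mul, ← pow_mul, mul_comm i 2])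
  by_contra hc
  obtain ⟨i, hi⟩ := nonempty_support_iff.2 hc
  have := hz i hi
  simp only [map_eq_zero] at this
  exact mem_support_iff.1 hi this

theorem aux_codeword {F : Type*} [Field F] (n : ℕ) (hn : 3 ≤ n) :
    (((X : F[X]) ^ n - 1) * (X ^ 2 - 1)).degree < ((2 * n : ℕ) : WithBot ℕ) ∧
    (((X : F[X]) ^ n - 1) * (X ^ 2 - 1)).support.card = 4 := by
  have e : ((X : F[X]) ^ n - 1) * (X ^ 2 - 1) = X ^ (n + 2) - X ^ n - X ^ 2 + X ^ 0 := by ring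
  have hs : (((X : F[X]) ^ n - 1) * (X ^ 2 - 1)).support = {0, 2, n, n + 2} := by
    rw [e]
    ext k
    simp only [mem_support_iff, coeff_add, coeff_sub, coeff_X_pow, Finset.mem_insert,
      Finset.mem_singleton]
    by_cases h0 : k = 0
    · subst h0; simp [show n ≠ 0 by omega, show 0 ≠ n by omega]
    by_cases h2 : k = 2
    · subst h2; simp [show n ≠ 0 by omega, show 2 ≠ n by omega]
    by_cases h3 : k = n
    · subst h3; simp [h0, h2]
    by_cases h4 : k = n + 2
    · subst h4; simp [show n ≠ 0 by omega]
    simp [h0, h2, h3, h4]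
  constructor
  · rw [degree_lt_iff_coeff_zero]
    intro k hk
    by_contra hc
    rw [← ne_eq, ← mem_support_iff, hs] at hc
    simp only [Finset.mem_insert, Finset.mem_singleton] at hc
    omega
  · rw [hs, Finset.card_insert_of_notMem, Finset.card_insert_of_notMem,
      Finset.card_insert_of_notMem, Finset.card_singleton]
    all_goals simp only [Finset.mem_insert, Finset.mem_singleton]; omega

theorem aux_numeric (q m n : ℕ) (hq2 : ∃ e : ℕ, q = 2 ^ e) (hq4 : 4 ≤ q) (hm : 2 ≤ m)
    (hn : n + 1 = q ^ m) (h : 8 < q * m) :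
    q ^ (2 * m + 2) < (2 * n * (2 * n - 1) / 2) * ((q - 1) * (q - 1)) := by
  have hq : q = 4 ∨ 8 ≤ q := by
    obtain ⟨e, rfl⟩ := hq2
    rcases Nat.lt_or_ge e 3 with he | he
    · interval_cases e <;> simp_all
    · right
      calc 8 = 2 ^ 3 := by norm_num
        _ ≤ 2 ^ e := Nat.pow_le_pow_right (by norm_num) he
  have hn63 : 63 ≤ n := by
    have : 64 ≤ q ^ m := by
      rcases hq with rfl | hq
      · have : 3 ≤ m := by omega
        calc 64 = 4 ^ 3 := by norm_num
          _ ≤ 4 ^ m := Nat.pow_le_pow_right (by norm_num) this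
      · calc 64 = 8 ^ 2 := by norm_num
          _ ≤ q ^ 2 := Nat.pow_le_pow_left hq 2
          _ ≤ q ^ m := Nat.pow_le_pow_right (by omega) hm
    omega
  have h1 : 2 * n * (2 * n - 1) / 2 = n * (2 * n - 1) := by
    rw [mul_assoc, Nat.mul_div_cancel_left _ (by norm_num)]
  have h2 : q ^ (2 * m + 2) = (n + 1) ^ 2 * q ^ 2 := by rw [hn]; ring
  rw [h1, h2]
  obtain ⟨r, rfl⟩ : ∃ r, q = r + 1 := ⟨q - 1, by omega⟩
  obtain ⟨k, rfl⟩ : ∃ k, n = k + 63 := ⟨n - 63, by omega⟩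
  have h3 : 2 * (k + 63) - 1 = 2 * k + 125 := by omega
  rw [h3, Nat.add_sub_cancel]
  have hr : 3 ≤ r := by omega
  have h4 : 9 * (r + 1) ^ 2 ≤ 16 * (r * r) := by nlinarith
  have h5 : 16 * (k + 63 + 1) ^ 2 < 9 * ((k + 63) * (2 * k + 125)) := by nlinarith
  have hpos : 0 < (r + 1) ^ 2 := by positivity
  have h6 : 16 * (k + 63 + 1) ^ 2 * (9 * (r + 1) ^ 2) <
      9 * ((k + 63) * (2 * k + 125)) * (16 * (r * r)) :=
    lt_of_lt_of_le (Nat.mul_lt_mul_of_pos_right h5 (by positivity)) (Nat.mul_le_mul_left _ h4)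
  nlinarith

theorem statement6 {F K : Type*} [Field F] [Fintype F] [Field K] [Fintype K] [Algebra F K]
    (q : ℕ) (hq : Fintype.card F = q) (hq2 : ∃ e : ℕ, q = 2 ^ e) (hq4 : 4 ≤ q)
    (m : ℕ) (hm : 2 ≤ m) (hK : Fintype.card K = q ^ m)
    (n : ℕ) (hn : n = q ^ m - 1)
    (β : K) (hβ : IsPrimitiveRoot β (q ^ m - 1)) :
    Module.finrank F
        (cyclicCode F (2 * n) ((X - 1) ^ 2 * minpoly F β * minpoly F (β ^ 2))) =
      2 * (q ^ m - 1) - 2 * m - 2 ∧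
    minDist (cyclicCode F (2 * n) ((X - 1) ^ 2 * minpoly F β * minpoly F (β ^ 2))) = 4 ∧
    (8 < q * m →
      ∀ D : Set (Fin (2 * n) → F),
        Nat.card D =
            Nat.card (cyclicCode F (2 * n) ((X - 1) ^ 2 * minpoly F β * minpoly F (β ^ 2))) →
          setMinDist D ≤ 4) := by
  classical
  have hqm : 16 ≤ q ^ m := by
    calc 16 = 4 ^ 2 := by norm_num
      _ ≤ q ^ 2 := Nat.pow_le_pow_left hq4 2
      _ ≤ q ^ m := Nat.pow_le_pow_right (by omega) hm
  have hn1 : n + 1 = q ^ m := by omega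
  rw [← hn] at hβ
  have : FiniteDimensional F K := Module.Finite.of_finite
  have hfin : Module.finrank F K = m := by
    have := Module.card_eq_pow_finrank (K := F) (V := K)
    rw [hK, hq] at this
    exact (Nat.pow_right_injective (by omega : 2 ≤ q) this).symm
  have hodd : Odd n := by
    have : Even (n + 1) := by
      rw [hn1]
      obtain ⟨e, rfl⟩ := hq2
      have he : e ≠ 0 := by rintro rfl; simp at hq4
      exact ((even_two.pow_of_ne_zero he)).pow_of_ne_zero (by omega)
    rcases Nat.even_or_odd n with h | h
    · exact absurd this (by simpa using h.add_one)
    · exact h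
  have hchar : CharP F 2 := by
    obtain ⟨e, he⟩ := hq2
    exact charP_of_card_eq_prime_pow (f := e) (by rw [hq, he])
  have hβ2 : IsPrimitiveRoot (β ^ 2) n := hβ.pow_of_coprime 2 (Nat.coprime_two_left.2 hodd)
  have hKn : Nat.card K = n + 1 := by rw [Nat.card_eq_fintype_card, hK, hn1]
  have hd1 := aux_minpoly_deg (F := F) n hKn (by omega) β hβ
  have hd2 := aux_minpoly_deg (F := F) n hKn (by omega) _ hβ2
  rw [hfin] at hd1 hd2
  have hIntegral : ∀ x : K, IsIntegral F x := fun x => Algebra.IsIntegral.isIntegral x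
  have hne : minpoly F β ≠ minpoly F (β ^ 2) :=
    aux_minpoly_ne q m hq4 hm hfin β (by rw [← hn]; exact hβ)
  have hcd : ∀ {x : K}, IsIntegral F x → ∀ p : F[X],
      IsCoprime (minpoly F x) p ∨ minpoly F x ∣ p := by
    intro x hx p
    by_cases h : minpoly F x ∣ p
    · exact Or.inr h
    · exact Or.inl ((minpoly.irreducible hx).coprime_iff_not_dvd.2 h)
  have hcop : IsCoprime (minpoly F β) (minpoly F (β ^ 2)) := by
    rcases hcd (hIntegral β) (minpoly F (β ^ 2)) with h | h
    · exact h
    · exact absurd (eq_of_monic_of_associated (minpoly.monic (hIntegral _)) (minpoly.monic (hIntegral _))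
        ((minpoly.irreducible (hIntegral β)).associated_of_dvd (minpoly.irreducible (hIntegral _)) h)) hne
  have hmm : minpoly F β * minpoly F (β ^ 2) ∣ X ^ n - 1 := by
    refine hcop.mul_dvd (minpoly.dvd F β ?_) (minpoly.dvd F (β ^ 2) ?_)
    · simp [hβ.pow_eq_one]
    · simp [hβ2.pow_eq_one]
  have hX2 : ((X : F[X]) - 1) ^ 2 = X ^ 2 - 1 := by
    rw [sub_pow_char (R := F[X]) (p := 2), one_pow]
  have hsq : ((X : F[X]) ^ n - 1) ^ 2 = X ^ (2 * n) - 1 := by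
    rw [sub_pow_char (R := F[X]) (p := 2), one_pow, ← pow_mul, mul_comm]
  set g : F[X] := (X - 1) ^ 2 * minpoly F β * minpoly F (β ^ 2) with hg
  have hgdeg : g.natDegree = 2 * m + 2 := by
    have hm1 : ((X : F[X]) - 1).Monic := by simpa using monic_X_sub_C (1 : F)
    have hd0 : ((X : F[X]) - 1).natDegree = 1 := by simpa using natDegree_X_sub_C (1 : F)
    rw [hg, ((hm1.pow 2).mul (minpoly.monic (hIntegral β))).natDegree_mul (minpoly.monic (hIntegral _)),
      (hm1.pow 2).natDegree_mul (minpoly.monic (hIntegral _)), hm1.natDegree_pow, hd0, hd1, hd2]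
    ring
  have hg0 : g ≠ 0 := by
    intro h0
    rw [h0] at hgdeg
    simp at hgdeg
  have hgc : g ∣ (X ^ n - 1) * (X ^ 2 - 1) := by
    rw [hg, ← hX2, mul_comm (X ^ n - 1), mul_assoc]
    exact mul_dvd_mul_left _ hmm
  have hgN : g ∣ X ^ (2 * n) - 1 := by
    rw [← hsq, hg, mul_assoc]
    have hX1 : ∀ x : K, x ≠ 1 → IsCoprime (X - 1 : F[X]) (minpoly F x) := by
      intro x hx
      rcases hcd (hIntegral x) (X - 1) with h | h
      · exact h.symm
      · exfalso
        obtain ⟨r, hr⟩ := h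
        have : aeval x (X - 1 : F[X]) = 0 := by rw [hr, map_mul, minpoly.aeval, zero_mul]
        simp only [map_sub, aeval_X, map_one, sub_eq_zero] at this
        exact hx this
    have hc : IsCoprime ((X - 1 : F[X]) ^ 2) (minpoly F β * minpoly F (β ^ 2)) :=
      ((hX1 β (hβ.ne_one (by omega))).mul_right (hX1 _ (hβ2.ne_one (by omega)))).pow_left
    refine hc.mul_dvd (pow_dvd_pow_of_dvd ?_ 2) (hmm.trans (dvd_pow_self _ two_ne_zero))
    simpa using sub_dvd_pow_sub_pow (X : F[X]) 1 n
  have hdim : 2 * m + 2 < 2 * n := by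
    have : m < 2 ^ m := Nat.lt_two_pow_self
    have h4 : (4:ℕ) ^ m = 2 ^ m * 2 ^ m := by rw [← mul_pow]; norm_num
    have : 4 ^ m ≤ q ^ m := Nat.pow_le_pow_left hq4 m
    have h3 : 2 ^ 2 ≤ 2 ^ m := Nat.pow_le_pow_right (by norm_num) hm
    nlinarith
  have hfr := aux_finrank (2 * n) g hgN hg0 (by omega)
  rw [hgdeg] at hfr
  refine ⟨by rw [hfr, ← hn]; omega, ?_, ?_⟩
  · have hw := aux_codeword (F := F) n (by omega)
    have hmem : ((X : F[X]) ^ n - 1) * (X ^ 2 - 1) ∈ cyclicCode F (2 * n) g :=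
      (aux_mem _ _ hgN _).2 ⟨hw.1, hgc⟩
    have hw0 : ((X : F[X]) ^ n - 1) * (X ^ 2 - 1) ≠ 0 := by
      intro h0
      have := hw.2
      rw [h0] at this
      simp at this
    unfold minDist
    apply le_antisymm
    · apply Nat.sInf_le
      exact ⟨_, hmem, hw0, hw.2⟩
    · apply le_csInf
      · exact ⟨_, _, hmem, hw0, hw.2⟩
      · rintro w ⟨c, hc, hc0, rfl⟩
        rw [aux_mem _ _ hgN] at hc
        by_contra hlt
        apply hc0
        have d1 : (X - 1) ^ 2 ∣ c :=
          ((Dvd.intro _ rfl).trans (Dvd.intro _ rfl : (X - 1) ^ 2 * minpoly F β ∣ g)).trans hc.2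
        have d2 : minpoly F β ∣ c :=
          ((Dvd.intro_left _ rfl).trans (Dvd.intro _ rfl : (X - 1) ^ 2 * minpoly F β ∣ g)).trans hc.2
        have d3 : minpoly F (β ^ 2) ∣ c := (Dvd.intro_left _ rfl : _ ∣ g).trans hc.2
        refine aux_weight n hodd β hβ c hc.1 d1 ?_ ?_ (by omega)
        · exact (minpoly.dvd_iff).1 d2
        · exact (minpoly.dvd_iff).1 d3
  · intro h8 D hD
    by_contra hcon
    push Not at hcon
    have hpk := aux_packing (2 * n) D (by
      intro u hu v hv huv
      refine le_trans hcon ?_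
      unfold setMinDist
      refine Nat.sInf_le ⟨u, hu, v, hv, huv, ?_⟩
      congr!)
    have hnum := aux_numeric q m n hq2 hq4 hm hn1 h8
    have hDc : Nat.card D = q ^ (2 * n - (2 * m + 2)) := by
      rw [hD, ← hfr, ← hq, ← Nat.card_eq_fintype_card]
      have : Module.Finite F (cyclicCode F (2 * n) g) :=
        Module.finite_of_finrank_pos (by rw [hfr]; omega)
      exact Module.natCard_eq_pow_finrank
    rw [hDc, hq] at hpk
    have hpow : q ^ (2 * n) = q ^ (2 * n - (2 * m + 2)) * q ^ (2 * m + 2) := by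
      rw [← pow_add]; congr 1; omega
    rw [hpow] at hpk
    have := Nat.le_of_mul_le_mul_left hpk (by positivity)
    omega
end

section
/- Let m ≥ 2 be an integer, n = 2^{2m−1} − 1, and let β be a primitive n-th root of unity in F_{4^{2m−1}}. Then the minimal polynomial m_β(x) of β over F_4 has degree 2m − 1, and the cyclic code of length 2n over F_4 with generator polynomial (x−1)^2 m_β(x) has dimension 2n − 2m − 1 and minimum distance exactly 4. Moreover, for m ≥ 3 this code is distance-optimal. -/
open Polynomial

/-- The weight two vector with entries `a` at `j` and `b` at `i < j`. -/
def errVec {F : Type*} [Field F] {N : ℕ} (t : (Σ j : Fin N, Fin j.1) × Fˣ × Fˣ) : Fin N → F :=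
  fun k => if k.1 = t.1.1.1 then t.2.1 else if k.1 = t.1.2.1 then t.2.2 else 0

lemma errVec_injective {F : Type*} [Field F] {N : ℕ} :
    Function.Injective (errVec : (Σ j : Fin N, Fin j.1) × Fˣ × Fˣ → Fin N → F) := by
  rintro ⟨⟨⟨j, hj⟩, ⟨i, hi⟩⟩, a, b⟩ ⟨⟨⟨j', hj'⟩, ⟨i', hi'⟩⟩, a', b'⟩ h
  simp only at hi hi'
  have e : ∀ k, k < N → (if k = j then (a : F) else if k = i then (b : F) else 0) =
      (if k = j' then (a' : F) else if k = i' then (b' : F) else 0) := by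
    intro k hk
    exact congrFun h ⟨k, hk⟩
  have ha := a.ne_zero
  have hb := b.ne_zero
  have ha' := a'.ne_zero
  have hb' := b'.ne_zero
  have e1 := e j hj
  have e2 := e i (hi.trans hj)
  have e3 := e j' hj'
  have e4 := e i' (hi'.trans hj')
  have hjj : j = j' := by grind
  have hii : i = i' := by grind
  subst hjj hii
  have h1 : a = a' := Units.ext (by simpa using e1)
  have h2 : b = b' := Units.ext (by simpa [hi.ne] using e2)
  rw [h1, h2]

lemma errVec_dist {F : Type*} [Field F] [DecidableEq F] {N : ℕ} (u : Fin N → F)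
    (t : (Σ j : Fin N, Fin j.1) × Fˣ × Fˣ) : hammingDist u (u + errVec t) ≤ 2 := by
  unfold hammingDist
  refine (Finset.card_le_card (t := {t.1.1, ⟨t.1.2.1, t.1.2.2.trans t.1.1.2⟩}) ?_).trans
    Finset.card_le_two
  intro k hk
  simp only [Finset.mem_filter, Finset.mem_univ, true_and, Pi.add_apply, errVec] at hk
  simp only [Finset.mem_insert, Finset.mem_singleton, Fin.ext_iff]
  by_contra hcon
  push Not at hcon
  simp [hcon] at hk

lemma sphere_packing {F : Type*} [Field F] [Fintype F] (hF : Fintype.card F = 4) {N : ℕ}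
    (D : Set (Fin N → F)) (hD : 4 < setMinDist D) :
    Nat.card D * (N * (N - 1) * 9) ≤ 2 * 4 ^ N := by
  classical
  have hd : ∀ u ∈ D, ∀ v ∈ D, u ≠ v → 4 < hammingDist u v := by
    intro u hu v hv huv
    refine lt_of_lt_of_le hD ?_
    unfold setMinDist
    refine Nat.sInf_le ⟨u, hu, v, hv, huv, ?_⟩
    congr
  have hinj : Function.Injective
      (fun p : D × ((Σ j : Fin N, Fin j.1) × Fˣ × Fˣ) => p.1.1 + errVec p.2) := by
    rintro ⟨⟨u, hu⟩, s⟩ ⟨⟨v, hv⟩, t⟩ h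
    simp only at h
    have huv : u = v := by
      by_contra hne
      have h1 := hd u hu v hv hne
      have h2 := hammingDist_triangle u (u + errVec s) v
      have h3 := errVec_dist u s
      have h4 := errVec_dist v t
      rw [← h, hammingDist_comm] at h4
      omega
    subst huv
    rw [errVec_injective (add_left_cancel h)]
  have hc := Nat.card_le_card_of_injective _ hinj
  have hu : Fintype.card Fˣ = 3 := by rw [Fintype.card_units, hF]
  have hs : Fintype.card (Σ j : Fin N, Fin j.1) = ∑ i ∈ Finset.range N, i := by
    rw [Fintype.card_sigma]
    simp [Fin.sum_univ_eq_sum_range (fun i => i) N]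
  have hg := Finset.sum_range_id_mul_two N
  rw [Nat.card_prod, Nat.card_eq_fintype_card (α := Fin N → F), Fintype.card_fun, hF,
    Fintype.card_fin, Nat.card_eq_fintype_card (α := _ × _), Fintype.card_prod, Fintype.card_prod,
    hu, hs] at hc
  rw [← hg]
  nlinarith

lemma card_bound (m : ℕ) (hm : 3 ≤ m) (N k : ℕ) (hN : N + 2 = 4 ^ m)
    (hk : k + (2 * m + 1) = N) : 2 * 4 ^ N < 4 ^ k * (N * (N - 1) * 9) := by
  have h64 : 4 ^ 3 ≤ 4 ^ m := Nat.pow_le_pow_right (by norm_num) hm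
  obtain ⟨M, rfl⟩ : ∃ M, N = M + 1 := ⟨N - 1, by omega⟩
  have e : 4 ^ (M + 1) = 4 ^ k * (4 * ((M + 3) * (M + 3))) := by
    rw [← hk, pow_add, pow_succ, pow_mul', hN.symm]
    ring
  rw [e]
  have hp : 0 < 4 ^ k := by positivity
  have : 2 * (4 * ((M + 3) * (M + 3))) < (M + 1) * (M + 1 - 1) * 9 := by
    simp only [Nat.add_sub_cancel]
    nlinarith
  nlinarith

lemma mem_cyclicCode {F : Type*} [Field F] {N : ℕ} {g : F[X]} (hg : g ∣ X ^ N - 1) (c : F[X]) :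
    c ∈ cyclicCode F N g ↔ c.degree < N ∧ g ∣ c := by
  unfold cyclicCode
  rw [Submodule.mem_inf, Polynomial.mem_degreeLT, Submodule.restrictScalars_mem,
    Ideal.mem_span_pair]
  refine and_congr_right fun _ => ⟨?_, ?_⟩
  · rintro ⟨a, b, rfl⟩
    exact dvd_add (Dvd.intro_left _ rfl) (hg.mul_left b)
  · rintro ⟨a, rfl⟩
    exact ⟨a, 0, by ring⟩

lemma cyclicCode_eq_map {F : Type*} [Field F] {N k : ℕ} {g : F[X]} (hg : g ∣ X ^ N - 1)
    (hg0 : g ≠ 0) (hk : k + g.natDegree = N) :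
    cyclicCode F N g = (degreeLT F k).map (LinearMap.mulLeft F g) := by
  ext c
  rw [mem_cyclicCode hg, Submodule.mem_map]
  have key : ∀ a : F[X], (g * a).degree < N ↔ a.degree < k := by
    intro a
    by_cases ha : a = 0
    · simp [ha, bot_lt_iff_ne_bot]
    rw [← natDegree_lt_iff_degree_lt (mul_ne_zero hg0 ha), ← natDegree_lt_iff_degree_lt ha,
      natDegree_mul hg0 ha]
    omega
  constructor
  · rintro ⟨h, a, rfl⟩
    exact ⟨a, mem_degreeLT.2 ((key a).1 h), rfl⟩
  · rintro ⟨a, h, rfl⟩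
    exact ⟨(key a).2 (mem_degreeLT.1 h), Dvd.intro _ rfl⟩

lemma finrank_cyclicCode {F : Type*} [Field F] {N k : ℕ} {g : F[X]} (hg : g ∣ X ^ N - 1)
    (hg0 : g ≠ 0) (hk : k + g.natDegree = N) :
    Module.finrank F (cyclicCode F N g) = k := by
  rw [cyclicCode_eq_map hg hg0 hk]
  have hinj : Function.Injective (LinearMap.mulLeft F g) := fun a b h => mul_left_cancel₀ hg0 h
  rw [← (Submodule.equivMapOfInjective _ hinj (degreeLT F k)).finrank_eq,
    (degreeLTEquiv F k).finrank_eq]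
  simp

lemma card_cyclicCode {F : Type*} [Field F] [Fintype F] {N k : ℕ} {g : F[X]} (hg : g ∣ X ^ N - 1)
    (hg0 : g ≠ 0) (hk : k + g.natDegree = N) :
    Nat.card (cyclicCode F N g) = Fintype.card F ^ k := by
  rw [cyclicCode_eq_map hg hg0 hk]
  have hinj : Function.Injective (LinearMap.mulLeft F g) := fun a b h => mul_left_cancel₀ hg0 h
  rw [← Nat.card_congr (Submodule.equivMapOfInjective _ hinj (degreeLT F k)).toEquiv,
    Nat.card_congr (degreeLTEquiv F k).toEquiv]
  simp

lemma natDegree_minpoly {F K : Type*} [Field F] [Fintype F] [Field K] [Fintype K] [Algebra F K]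
    (hF : Fintype.card F = 4) (r : ℕ) (hr : Odd r) (hK : Fintype.card K = 4 ^ r)
    (β : K) (hβ : IsPrimitiveRoot β (2 ^ r - 1)) : (minpoly F β).natDegree = r := by
  have hfr : Module.finrank F K = r := by
    have h := Module.card_eq_pow_finrank (K := F) (V := K)
    rw [hF, hK] at h
    exact (Nat.pow_right_injective (show 2 ≤ 4 by norm_num) h).symm
  have hint : IsIntegral F β := Algebra.IsIntegral.isIntegral β
  have h1 : (minpoly F β).natDegree ∣ r := by
    rw [← hfr]; exact minpoly.degree_dvd hint
  refine Nat.dvd_antisymm h1 ?_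
  set d := (minpoly F β).natDegree with hd
  have hβ0 : β ≠ 0 := by
    rintro rfl
    have h2 : 2 ^ 1 ≤ 2 ^ r := Nat.pow_le_pow_right (by norm_num) hr.pos
    have := hβ.pow_eq_one
    rw [zero_pow (by omega)] at this
    exact zero_ne_one this
  have hc : Nat.card (IntermediateField.adjoin F {β}) = 4 ^ d := by
    rw [Module.natCard_eq_pow_finrank (K := F), IntermediateField.adjoin.finrank hint,
      Nat.card_eq_fintype_card, hF]
  have hpow : β ^ (4 ^ d - 1) = 1 := by
    let γ : IntermediateField.adjoin F {β} := IntermediateField.AdjoinSimple.gen F β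
    have hγ : algebraMap _ K γ = β := IntermediateField.AdjoinSimple.algebraMap_gen F β
    have : Fintype (IntermediateField.adjoin F {β}) := Fintype.ofFinite _
    have hγ0 : γ ≠ 0 := by
      intro h
      rw [h, map_zero] at hγ
      exact hβ0 hγ.symm
    have := FiniteField.pow_card_sub_one_eq_one γ hγ0
    rw [← Nat.card_eq_fintype_card, hc] at this
    rw [← hγ, ← map_pow, this, map_one]
  have hdvd := hβ.dvd_of_pow_eq_one _ hpow
  have h4 : 4 ^ d - 1 = 2 ^ (2 * d) - 1 := by rw [pow_mul]; norm_num
  rw [h4] at hdvd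
  have hg := Nat.pow_sub_one_gcd_pow_sub_one 2 r (2 * d)
  rw [Nat.gcd_eq_left hdvd] at hg
  have h5 : r = r.gcd (2 * d) := by
    apply Nat.pow_right_injective (le_refl 2)
    have := Nat.one_le_two_pow (n := r)
    have := Nat.one_le_two_pow (n := r.gcd (2 * d))
    simp only
    omega
  have h6 : r ∣ 2 * d := by rw [h5]; exact Nat.gcd_dvd_right _ _
  exact (Nat.Coprime.dvd_of_dvd_mul_left (Nat.coprime_two_right.2 hr) h6)

lemma parity_cast {F : Type*} [Field F] [CharP F 2] (i : ℕ) :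
    ((i : F) = 0 ∧ i % 2 = 0) ∨ ((i : F) = 1 ∧ i % 2 = 1) := by
  rcases Nat.mod_two_eq_zero_or_one i with h | h
  · exact Or.inl ⟨(CharP.cast_eq_zero_iff F 2 i).2 (Nat.dvd_of_mod_eq_zero h), h⟩
  · refine Or.inr ⟨?_, h⟩
    rw [← Nat.div_add_mod i 2, h]
    simp [CharTwo.two_eq_zero]

/-- Two exponents of the same parity below `2n` with `β ^ i = β ^ j` agree. -/
lemma pow_inj_parity {K : Type*} [Field K] {n : ℕ} (hodd : n % 2 = 1) {β : K}
    (hβ : IsPrimitiveRoot β n) {i j : ℕ} (hij : i < j) (hj : j < 2 * n) (hp : i % 2 = j % 2)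
    (h : β ^ i = β ^ j) : False := by
  have hβ0 : β ≠ 0 := hβ.ne_zero (by omega)
  have h1 : β ^ (j - i) = 1 := by
    have : β ^ i * β ^ (j - i) = β ^ i * 1 := by
      rw [← pow_add, mul_one, h]; congr 1; omega
    exact mul_left_cancel₀ (pow_ne_zero _ hβ0) this
  obtain ⟨t, ht⟩ := hβ.dvd_of_pow_eq_one _ h1
  have h2 : t = 1 := by
    have : t < 2 := by
      by_contra hc
      have : n * 2 ≤ n * t := Nat.mul_le_mul_left _ (by omega)
      omega
    have : t ≠ 0 := by rintro rfl; omega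
    omega
  subst h2
  omega

/-- The trinomial relation over `F_4` is impossible. -/
lemma trinomial {F K : Type*} [Field F] [Fintype F] [Field K] [Algebra F K]
    [CharP F 2] [CharP K 2] (hF : Fintype.card F = 4) (s : ℕ) (a b c : F) (hb : b ≠ 0)
    (hc : c ≠ 0) (ha : a ≠ 0) (habc : a + b + c = 0) (x y z : K)
    (hx : x ^ (2 * 4 ^ s) = x) (hy : y ^ (2 * 4 ^ s) = y) (hz : z ^ (2 * 4 ^ s) = z)
    (h : algebraMap F K a * x + algebraMap F K b * y + algebraMap F K c * z = 0) : x = z := by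
  have hfix : ∀ t : F, (algebraMap F K t) ^ (2 * 4 ^ s) = (algebraMap F K t) ^ 2 := by
    intro t
    rw [pow_mul', ← map_pow, ← hF, FiniteField.pow_card_pow]
  have e2 : 2 * 4 ^ s = 2 ^ (2 * s + 1) := by rw [pow_succ, pow_mul]; ring
  have h2 := congrArg (fun w => w ^ (2 * 4 ^ s)) h
  rw [e2, add_pow_char_pow, add_pow_char_pow, ← e2, mul_pow, mul_pow, mul_pow, hfix, hfix, hfix,
    hx, hy, hz, zero_pow (by positivity)] at h2
  have ha' : algebraMap F K a = - (algebraMap F K b + algebraMap F K c) := by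
    rw [← map_add, ← map_neg]; congr 1; linear_combination habc
  have hb0 : algebraMap F K b ≠ 0 := by simpa using hb
  have hc0 : algebraMap F K c ≠ 0 := by simpa using hc
  have ha0 : algebraMap F K a ≠ 0 := by simpa using ha
  have h20 : (2 : K) = 0 := CharTwo.two_eq_zero
  rw [ha'] at h h2 ha0
  generalize algebraMap F K b = B at *
  generalize algebraMap F K c = C at *
  have key : (B + C) * (C * (x - z)) = 0 := by
    linear_combination h2 - B * h + (-B ^ 2 * x - B * C * x - C ^ 2 * z) * h20
  rcases mul_eq_zero.1 key with h3 | h3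
  · exact absurd (by rw [h3, neg_zero]) ha0
  · rcases mul_eq_zero.1 h3 with h4 | h4
    · exact absurd h4 hc0
    · exact sub_eq_zero.1 h4

/-- A nonzero codeword has at least four nonzero coefficients. -/
lemma four_le_weight {F K : Type*} [Field F] [Fintype F] [Field K] [Algebra F K]
    [CharP F 2] [CharP K 2] (hF : Fintype.card F = 4) (s n : ℕ) (hn : n + 1 = 2 * 4 ^ s)
    (β : K) (hβ : IsPrimitiveRoot β n) (c : F[X]) (hc0 : c ≠ 0) (hdeg : c.degree < (2 * n : ℕ))
    (h1 : c.eval 1 = 0) (h2 : c.derivative.eval 1 = 0) (h3 : aeval β c = 0) :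
    4 ≤ c.support.card := by
  have hodd : n % 2 = 1 := by omega
  have h20 : (2 : F) = 0 := CharTwo.two_eq_zero
  have hfix : ∀ i : ℕ, (β ^ i) ^ (2 * 4 ^ s) = β ^ i := by
    intro i
    rw [← hn, pow_succ, ← pow_mul, mul_comm i n, pow_mul, hβ.pow_eq_one, one_pow, one_mul]
  have hsup : ∀ i, c.coeff i ≠ 0 → i < 2 * n := by
    intro i hi
    have := lt_of_le_of_lt (le_degree_of_ne_zero hi) hdeg
    exact_mod_cast this
  by_contra hlt
  have hcases : c.support.card = 0 ∨ c.support.card = 1 ∨ c.support.card = 2 ∨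
      c.support.card = 3 := by omega
  rcases hcases with h | h | h | h
  · exact hc0 (card_support_eq_zero.1 h)
  · obtain ⟨i, x, hx, rfl⟩ := card_support_eq_one.1 h
    simp at h1
    exact hx h1
  · obtain ⟨i, j, hij, x, y, hx, hy, rfl⟩ := card_support_eq_two.1 h
    have hj : j < 2 * n := hsup j (by simp [coeff_X_pow, hij.ne', hy])
    simp [derivative_X_pow] at h1 h2 h3
    have hyx : y = x := by linear_combination h1 - x * h20
    subst hyx
    have hy' : algebraMap F K y ≠ 0 := by simpa using hy
    have hp : i % 2 = j % 2 := by
      rcases parity_cast (F := F) i with ⟨e1, f1⟩ | ⟨e1, f1⟩ <;>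
      rcases parity_cast (F := F) j with ⟨e2, f2⟩ | ⟨e2, f2⟩ <;>
      simp [e1, e2, hy] at h2 <;> omega
    refine pow_inj_parity hodd hβ hij hj hp ?_
    have h4 : algebraMap F K y * (β ^ i + β ^ j) = 0 := by linear_combination h3
    exact CharTwo.add_eq_zero.1 ((mul_eq_zero.1 h4).resolve_left hy')
  · obtain ⟨i, j, k, hij, hjk, x, y, z, hx, hy, hz, rfl⟩ := card_support_eq_three.1 h
    have hk : k < 2 * n := hsup k (by simp [coeff_X_pow, hjk.ne', (hij.trans hjk).ne', hz])
    simp [derivative_X_pow] at h1 h2 h3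
    have hp : i % 2 = k % 2 := by
      rcases parity_cast (F := F) i with ⟨e1, f1⟩ | ⟨e1, f1⟩ <;>
      rcases parity_cast (F := F) j with ⟨e2, f2⟩ | ⟨e2, f2⟩ <;>
      rcases parity_cast (F := F) k with ⟨e3, f3⟩ | ⟨e3, f3⟩ <;>
      rw [e1, e2, e3] at h2 <;> first | omega | (exfalso; grind)
    refine pow_inj_parity hodd hβ (hij.trans hjk) hk hp ?_
    exact trinomial hF s x y z hy hz hx h1 _ _ _ (hfix i) (hfix j) (hfix k) h3

/-- for `m ≥ 2`, `n = 2^{2m-1} - 1` and `β` a primitive `n`-th root of unity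
in `F_{4^{2m-1}}`, the minimal polynomial `m_β(x)` over `F_4` has degree `2m - 1`, and the
cyclic code of length `2n` over `F_4` with generator polynomial `(x-1)^2 m_β(x)` has
dimension `2n - 2m - 1` and minimum distance exactly `4`; for `m ≥ 3` it is
distance-optimal. -/
theorem statement9 {F K : Type*} [Field F] [Fintype F] [Field K] [Fintype K] [Algebra F K]
    (hF : Fintype.card F = 4)
    (m : ℕ) (hm : 2 ≤ m) (hK : Fintype.card K = 4 ^ (2 * m - 1))
    (n : ℕ) (hn : n = 2 ^ (2 * m - 1) - 1)
    (β : K) (hβ : IsPrimitiveRoot β n) :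
    (minpoly F β).natDegree = 2 * m - 1 ∧
    Module.finrank F (cyclicCode F (2 * n) ((X - 1) ^ 2 * minpoly F β)) =
      2 * n - 2 * m - 1 ∧
    minDist (cyclicCode F (2 * n) ((X - 1) ^ 2 * minpoly F β)) = 4 ∧
    (3 ≤ m →
      ∀ D : Set (Fin (2 * n) → F),
        Nat.card D = Nat.card (cyclicCode F (2 * n) ((X - 1) ^ 2 * minpoly F β)) →
          setMinDist D ≤ 4) := by
  have hF2 : (2 : F) = 0 := by
    have h := FiniteField.cast_card_eq_zero F
    rw [hF] at h
    have : (2 : F) * 2 = 0 := by push_cast at h; linear_combination h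
    simpa using this
  have : CharP F 2 := CharTwo.of_one_ne_zero_of_two_eq_zero one_ne_zero hF2
  have : CharP K 2 := charP_of_injective_algebraMap (algebraMap F K).injective 2
  obtain ⟨s, rfl⟩ : ∃ s, m = s + 1 := ⟨m - 1, by omega⟩
  have hr : 2 * (s + 1) - 1 = 2 * s + 1 := by omega
  rw [hr] at hK hn ⊢
  have hpow : 2 ^ (2 * s + 1) = 2 * 4 ^ s := by rw [pow_succ, pow_mul]; norm_num [mul_comm]
  have h4s : 4 ^ 1 ≤ 4 ^ s := Nat.pow_le_pow_right (by norm_num) (by omega)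
  have hn1 : n + 1 = 2 * 4 ^ s := by omega
  have hn7 : 7 ≤ n := by omega
  have hdeg : (minpoly F β).natDegree = 2 * s + 1 :=
    natDegree_minpoly hF _ ⟨s, rfl⟩ hK β (hn ▸ hβ)
  have hint : IsIntegral F β := Algebra.IsIntegral.isIntegral β
  have hX1 : (X - 1 : F[X]) = X - C 1 := by simp
  have hX1m : (X - 1 : F[X]).Monic := by rw [hX1]; exact monic_X_sub_C 1
  have hX1d : (X - 1 : F[X]).natDegree = 1 := by rw [hX1]; exact natDegree_X_sub_C 1
  have hmon : ((X - 1) ^ 2 * minpoly F β).Monic := (hX1m.pow 2).mul (minpoly.monic hint)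
  have hgdeg : ((X - 1) ^ 2 * minpoly F β).natDegree = 2 * s + 3 := by
    rw [(hX1m.pow 2).natDegree_mul (minpoly.monic hint), hX1m.natDegree_pow, hX1d, hdeg]
    omega
  -- divisibility facts
  have hd1 : (X - 1 : F[X]) ∣ X ^ n - 1 := sub_one_dvd_pow_sub_one X n
  have hd2 : minpoly F β ∣ X ^ n - 1 := by
    apply minpoly.dvd
    simp [hβ.pow_eq_one]
  have hcop : IsCoprime (X - 1 : F[X]) (minpoly F β) := by
    have hirr : Irreducible (X - 1 : F[X]) := by rw [hX1]; exact irreducible_X_sub_C 1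
    refine (hirr.coprime_iff_not_dvd).2 fun hdv => ?_
    rw [hX1, dvd_iff_isRoot] at hdv
    have : (minpoly F β).natDegree = 1 := natDegree_eq_of_degree_eq_some
      (degree_eq_one_of_irreducible_of_root (minpoly.irreducible hint) hdv)
    omega
  have hd3 : (X - 1) * minpoly F β ∣ X ^ n - 1 := hcop.mul_dvd hd1 hd2
  have hgw : (X - 1) ^ 2 * minpoly F β ∣ (X - 1) * (X ^ n - 1) := by
    rw [sq, mul_assoc]
    exact mul_dvd_mul_left _ hd3
  have hgN : (X - 1) ^ 2 * minpoly F β ∣ X ^ (2 * n) - 1 := by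
    refine hgw.trans ?_
    have h20 : (2 : F[X]) = 0 := CharTwo.two_eq_zero
    have : (X ^ (2 * n) - 1 : F[X]) = (X ^ n - 1) * (X ^ n - 1) := by
      linear_combination (X ^ n - 1) * h20
    rw [this]
    exact mul_dvd_mul_right hd1 _
  have hbig : 4 * s < 4 ^ s + 1 := by
    obtain ⟨t, rfl⟩ : ∃ t, s = t + 1 := ⟨s - 1, by omega⟩
    have ht : t < 4 ^ t := Nat.lt_pow_self (by norm_num)
    rw [pow_succ]
    omega
  have hk : (2 * n - 2 * (s + 1) - 1) + ((X - 1) ^ 2 * minpoly F β).natDegree = 2 * n := by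
    rw [hgdeg]; omega
  have hlow : ∀ c ∈ cyclicCode F (2 * n) ((X - 1) ^ 2 * minpoly F β), c ≠ 0 →
      4 ≤ c.support.card := by
    intro c hc hc0
    obtain ⟨hcd, q, rfl⟩ := (mem_cyclicCode hgN c).1 hc
    refine four_le_weight hF s n hn1 β hβ _ hc0 hcd ?_ ?_ ?_
    · simp
    · simp [derivative_mul, derivative_pow]
    · simp
  refine ⟨hdeg, finrank_cyclicCode hgN hmon.ne_zero hk, ?_, ?_⟩
  · have hwm : ((X - 1) * (X ^ n - 1) : F[X]).Monic :=
      hX1m.mul (monic_X_pow_sub_C 1 (by omega))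
    have hwmem : ((X - 1) * (X ^ n - 1) : F[X]) ∈
        cyclicCode F (2 * n) ((X - 1) ^ 2 * minpoly F β) := by
      refine (mem_cyclicCode hgN _).2 ⟨?_, hgw⟩
      have hne : (X ^ n - 1 : F[X]) ≠ 0 := right_ne_zero_of_mul hwm.ne_zero
      rw [← natDegree_lt_iff_degree_lt hwm.ne_zero, hX1m.natDegree_mul' hne, hX1d]
      have : (X ^ n - 1 : F[X]).natDegree = n := natDegree_X_pow_sub_C (r := 1)
      omega
    have hwc : ((X - 1) * (X ^ n - 1) : F[X]).support.card ≤ 4 := by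
      refine (Finset.card_le_card (t := {0, 1, n, n + 1}) ?_).trans Finset.card_le_four
      intro i hi
      have e : ((X - 1) * (X ^ n - 1) : F[X]) = X ^ (n + 1) - X ^ n - X ^ 1 + X ^ 0 := by ring
      rw [mem_support_iff, e] at hi
      simp only [coeff_add, coeff_sub, coeff_X_pow] at hi
      simp only [Finset.mem_insert, Finset.mem_singleton]
      by_contra hcon
      push Not at hcon
      simp [hcon] at hi
    unfold minDist
    have hmem : ((X - 1) * (X ^ n - 1) : F[X]).support.card ∈
        {w | ∃ c ∈ cyclicCode F (2 * n) ((X - 1) ^ 2 * minpoly F β), c ≠ 0 ∧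
          c.support.card = w} := ⟨_, hwmem, hwm.ne_zero, rfl⟩
    refine le_antisymm ?_ ?_
    · exact (Nat.sInf_le hmem).trans hwc
    · refine le_csInf ⟨_, hmem⟩ ?_
      rintro w ⟨c, hc, hc0, rfl⟩
      exact hlow c hc hc0
  · intro hm3 D hD
    by_contra hcon
    have h1 := sphere_packing hF D (by omega)
    rw [hD, card_cyclicCode hgN hmon.ne_zero hk, hF] at h1
    have h2 := card_bound (s + 1) hm3 (2 * n) (2 * n - 2 * (s + 1) - 1)
      (by rw [pow_succ]; omega) (by omega)
    omega
end

section
/- Let m ≥ 5 be an odd integer, n = 3(2^m − 1), and let β be a primitive n-th root of unity in F_{2^{2m}}. Then the cyclic code of length 2n over F_2 with generator polynomial (x−1)^2 m_β(x)^2 m_{β^3}(x) m_{β^5}(x) has dimension 6(2^m − 1) − 7m − 2 and minimum distance exactly 8. -/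
open Polynomial

namespace S13

theorem deg_dvd {K : Type*} [Field K] [Fintype K] [Algebra (ZMod 2) K] (x : K) (k : ℕ) :
    (minpoly (ZMod 2) x).natDegree ∣ k ↔ x ^ 2 ^ k = x := by
  have hi : IsIntegral (ZMod 2) x := IsIntegral.of_finite _ _
  rw [(minpoly.irreducible hi).natDegree_dvd_iff_dvd_X_pow_card_pow_sub_X, minpoly.dvd_iff]
  simp [sub_eq_zero]

theorem pow_eq_iff {K : Type*} [Field K] {x : K} {N : ℕ} (hx : IsPrimitiveRoot x N) (hN : 0 < N)
    (k : ℕ) : x ^ 2 ^ k = x ↔ N ∣ 2 ^ k - 1 := by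
  have h0 : x ≠ 0 := hx.ne_zero hN.ne'
  rw [← hx.pow_eq_one_iff_dvd]
  have h : x ^ 2 ^ k = x ^ (2 ^ k - 1) * x := by
    rw [← pow_succ, Nat.sub_add_cancel Nat.one_le_two_pow]
  rw [h]
  constructor
  · intro h; exact mul_right_cancel₀ h0 (by rw [h, one_mul])
  · intro h; rw [h, one_mul]

theorem modEq_of_pow_eq {K : Type*} [Field K] {x : K} {N : ℕ} (hx : IsPrimitiveRoot x N)
    (hN : 0 < N) {i j : ℕ} (h : x ^ i = x ^ j) : i ≡ j [MOD N] := by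
  rw [hx.eq_orderOf]
  exact (IsOfFinOrder.pow_eq_pow_iff_modEq (hx.isOfFinOrder hN.ne')).mp h

theorem deg_big {K : Type*} [Field K] [Fintype K] [Algebra (ZMod 2) K]
    (m : ℕ) (hm : 5 ≤ m) (hK : Fintype.card K = 2 ^ (2 * m)) (β : K)
    (hβ : IsPrimitiveRoot β (3 * (2 ^ m - 1))) : (minpoly (ZMod 2) β).natDegree = 2 * m := by
  have hq : 2 ^ 5 ≤ 2 ^ m := Nat.pow_le_pow_right (by norm_num) hm
  have h1 : (minpoly (ZMod 2) β).natDegree ∣ 2 * m := by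
    rw [deg_dvd, ← hK]; exact FiniteField.pow_card β
  have hpos : 0 < (minpoly (ZMod 2) β).natDegree := minpoly.natDegree_pos (IsIntegral.of_finite _ _)
  have h2 : 3 * (2 ^ m - 1) ∣ 2 ^ (minpoly (ZMod 2) β).natDegree - 1 := by
    rw [← pow_eq_iff hβ (by omega), ← deg_dvd]
  generalize (minpoly (ZMod 2) β).natDegree = d at *
  have h3 : m < d := by
    by_contra hlt
    have := Nat.pow_le_pow_right (n := 2) (by norm_num) (not_lt.mp hlt)
    have h4 : 2 ^ 1 ≤ 2 ^ d := Nat.pow_le_pow_right (by norm_num) hpos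
    have := Nat.le_of_dvd (by omega) h2
    omega
  obtain ⟨e, he⟩ := h1
  have : e < 2 := by by_contra h; nlinarith
  interval_cases e <;> omega

theorem deg_small {K : Type*} [Field K] [Fintype K] [Algebra (ZMod 2) K]
    (m : ℕ) (hm : 5 ≤ m) (β : K)
    (hβ : IsPrimitiveRoot β (2 ^ m - 1)) : (minpoly (ZMod 2) β).natDegree = m := by
  have hq : 2 ^ 5 ≤ 2 ^ m := Nat.pow_le_pow_right (by norm_num) hm
  have h1 : (minpoly (ZMod 2) β).natDegree ∣ m := by
    rw [deg_dvd, pow_eq_iff hβ (by omega)]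
  have hpos : 0 < (minpoly (ZMod 2) β).natDegree := minpoly.natDegree_pos (IsIntegral.of_finite _ _)
  have h2 : (2 ^ m - 1) ∣ 2 ^ (minpoly (ZMod 2) β).natDegree - 1 := by
    rw [← pow_eq_iff hβ (by omega), ← deg_dvd]
  generalize (minpoly (ZMod 2) β).natDegree = d at *
  refine le_antisymm (Nat.le_of_dvd (by omega) h1) ?_
  by_contra hlt
  have h5 := Nat.pow_lt_pow_right (a := 2) (by norm_num) (not_le.mp hlt)
  have h4 : 2 ^ 1 ≤ 2 ^ d := Nat.pow_le_pow_right (by norm_num) hpos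
  have := Nat.le_of_dvd (by omega) h2
  omega

/-- `5` is not a power of two modulo `2^m - 1`. -/
theorem five_ne (m : ℕ) (hm : 5 ≤ m) (i : ℕ) : ¬ (5 ≡ 2 ^ i [MOD (2 ^ m - 1)]) := by
  intro h
  have hq : 2 ^ 5 ≤ 2 ^ m := Nat.pow_le_pow_right (by norm_num) hm
  have h1 : 2 ^ m ≡ 1 [MOD (2 ^ m - 1)] := by
    have : (2 ^ m - 1) + 1 ≡ 1 [MOD (2 ^ m - 1)] := by simp [Nat.ModEq]
    rwa [Nat.sub_add_cancel Nat.one_le_two_pow] at this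
  have h2 : 2 ^ i ≡ 2 ^ (i % m) [MOD (2 ^ m - 1)] := by
    conv_lhs => rw [← Nat.div_add_mod i m, pow_add, pow_mul]
    simpa using (h1.pow (i / m)).mul_right (2 ^ (i % m))
  have h3 := h.trans h2
  have hlt : i % m < m := Nat.mod_lt _ (by omega)
  generalize i % m = j at *
  have h5 : 2 ^ j ≤ 2 ^ (m - 1) := Nat.pow_le_pow_right (by norm_num) (by omega)
  have h6 : 2 ^ m = 2 * 2 ^ (m - 1) := by rw [← pow_succ']; congr 1; omega
  have h7 : 5 = 2 ^ j := Nat.ModEq.eq_of_lt_of_lt h3 (by omega) (by omega)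
  rcases j with _ | j
  · simp at h7
  · rw [pow_succ] at h7; omega

/-- `5` is coprime to `n`. -/
theorem coprime_five (m : ℕ) (hmo : Odd m) : Nat.Coprime 5 (3 * (2 ^ m - 1)) := by
  rw [Nat.Prime.coprime_iff_not_dvd (by norm_num)]
  intro h
  obtain ⟨k, rfl⟩ := hmo
  have h1 : 5 ∣ 2 ^ (2 * k + 1) - 1 := (Nat.Coprime.dvd_of_dvd_mul_left (by norm_num) h)
  have h3 : ∀ k : ℕ, 2 ^ (2 * k + 1) % 5 = 2 ∨ 2 ^ (2 * k + 1) % 5 = 3 := by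
    intro k
    induction k with
    | zero => simp
    | succ k ih => rw [show 2 ^ (2 * (k + 1) + 1) = 4 * 2 ^ (2 * k + 1) by ring]; omega
  have h4 := h3 k
  have h5 : 1 ≤ 2 ^ (2 * k + 1) := Nat.one_le_two_pow
  generalize 2 ^ (2 * k + 1) = z at *
  omega

theorem coeff_one {c : (ZMod 2)[X]} {i : ℕ} (h : i ∈ c.support) : c.coeff i = 1 := by
  have h := mem_support_iff.mp h
  generalize c.coeff i = a at *
  revert a; decide

theorem aeval_sum {K : Type*} [Field K] [Algebra (ZMod 2) K] (c : (ZMod 2)[X]) (x : K) :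
    aeval x c = ∑ i ∈ c.support, x ^ i := by
  rw [aeval_def, eval₂_eq_sum, sum_def]
  refine Finset.sum_congr rfl fun i hi => ?_
  rw [coeff_one hi]; simp

theorem aeval_deriv {K : Type*} [Field K] [Algebra (ZMod 2) K] (c : (ZMod 2)[X]) (x : K) :
    x * aeval x (derivative c) = ∑ i ∈ c.support with Odd i, x ^ i := by
  have : CharP K 2 := charP_of_injective_algebraMap (algebraMap (ZMod 2) K).injective 2
  rw [derivative_apply, sum_def, map_sum, Finset.mul_sum, Finset.sum_filter]
  refine Finset.sum_congr rfl fun i hi => ?_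
  rw [coeff_one hi]
  split_ifs with h
  · have h1 : ((i : ℕ) : K) = 1 := by
      obtain ⟨k, rfl⟩ := h
      push_cast
      rw [CharTwo.two_eq_zero]; simp
    obtain ⟨k, rfl⟩ := h
    rw [one_mul, map_mul, aeval_C, map_natCast, h1, map_pow, aeval_X, one_mul,
      Nat.add_sub_cancel, pow_succ']
  · have h1 : ((i : ℕ) : K) = 0 := by
      obtain ⟨k, rfl⟩ := Nat.not_odd_iff_even.mp h
      push_cast
      exact CharTwo.add_self_eq_zero _
    simp [h1]

theorem vander {K : Type*} [Field K] (s : Finset ℕ) (β : K)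
    (hinj : Set.InjOn (fun i => β ^ i) (s : Set ℕ))
    (h : ∀ j < 7, ∑ i ∈ s, (β ^ i) ^ j = 0) (hc : s.card ≤ 7) : s = ∅ := by
  by_contra hne
  obtain ⟨i0, hi0⟩ := Finset.nonempty_iff_ne_empty.mpr hne
  set p : K[X] := ∏ i ∈ s.erase i0, (X - C (β ^ i)) with hp
  have hdeg : p.natDegree < 7 := by
    rw [hp, natDegree_prod_of_monic _ _ (fun i _ => monic_X_sub_C _)]
    simp only [natDegree_X_sub_C, Finset.sum_const, smul_eq_mul, mul_one,
      Finset.card_erase_of_mem hi0]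
    have := Finset.card_pos.mpr ⟨i0, hi0⟩
    omega
  have h1 : ∑ i ∈ s, p.eval (β ^ i) = 0 := by
    simp_rw [eval_eq_sum_range' hdeg]
    rw [Finset.sum_comm]
    refine Finset.sum_eq_zero fun j hj => ?_
    rw [← Finset.mul_sum, h j (Finset.mem_range.mp hj), mul_zero]
  rw [Finset.sum_eq_single_of_mem i0 hi0] at h1
  · rw [hp, eval_prod, Finset.prod_eq_zero_iff] at h1
    obtain ⟨i, hi, h2⟩ := h1
    simp only [eval_sub, eval_X, eval_C, sub_eq_zero] at h2
    exact (Finset.ne_of_mem_erase hi) (hinj (Finset.mem_of_mem_erase hi) hi0 h2.symm)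
  · intro i hi hne
    rw [hp, eval_prod, Finset.prod_eq_zero_iff]
    exact ⟨i, Finset.mem_erase.mpr ⟨hne, hi⟩, by simp⟩

theorem bch {K : Type*} [Field K] [CharP K 2] (s : Finset ℕ) (β : K)
    (hinj : Set.InjOn (fun i => β ^ i) (s : Set ℕ))
    (h0 : Even s.card) (h1 : ∑ i ∈ s, β ^ i = 0) (h3 : ∑ i ∈ s, (β ^ 3) ^ i = 0)
    (h5 : ∑ i ∈ s, (β ^ 5) ^ i = 0) (hc : s.card < 8) : s = ∅ := by
  have sq : ∀ j, ∑ i ∈ s, (β ^ i) ^ j = 0 → ∑ i ∈ s, (β ^ i) ^ (2 * j) = 0 := by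
    intro j hj
    have := congrArg (fun x => x ^ 2) hj
    simp only [CharTwo.sum_sq] at this
    rw [zero_pow (by norm_num)] at this
    rw [← this]
    exact Finset.sum_congr rfl fun i _ => by ring
  have e1 : ∑ i ∈ s, (β ^ i) ^ 1 = 0 := by simpa using h1
  have e3 : ∑ i ∈ s, (β ^ i) ^ 3 = 0 := by
    rw [← h3]; exact Finset.sum_congr rfl fun i _ => by ring
  have e5 : ∑ i ∈ s, (β ^ i) ^ 5 = 0 := by
    rw [← h5]; exact Finset.sum_congr rfl fun i _ => by ring
  refine vander s β hinj (fun j hj => ?_) (by omega)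
  interval_cases j
  · simp only [pow_zero, Finset.sum_const, nsmul_eq_mul, mul_one]
    obtain ⟨k, hk⟩ := h0
    rw [hk]; push_cast; exact CharTwo.add_self_eq_zero _
  · exact e1
  · exact sq 1 e1
  · exact e3
  · exact sq 2 (sq 1 e1)
  · exact e5
  · exact sq 3 e3

theorem four_le {K : Type*} [Field K] [CharP K 2] (s : Finset ℕ) (β : K)
    (hinj : Set.InjOn (fun i => β ^ i) (s : Set ℕ))
    (h0 : Even s.card) (h1 : ∑ i ∈ s, β ^ i = 0) (hs : s ≠ ∅) : 4 ≤ s.card := by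
  by_contra hc
  have hpos : 0 < s.card := Finset.card_pos.mpr (Finset.nonempty_iff_ne_empty.mpr hs)
  obtain ⟨k, hk⟩ := h0
  have h2 : s.card = 2 := by omega
  obtain ⟨x, y, hxy, rfl⟩ := Finset.card_eq_two.mp h2
  rw [Finset.sum_pair hxy, CharTwo.add_eq_zero] at h1
  exact hxy (hinj (by simp) (by simp) h1)

theorem lower {K : Type*} [Field K] [Fintype K] [Algebra (ZMod 2) K] (n : ℕ) (hn : Odd n)
    (β : K) (hβ : IsPrimitiveRoot β n) (c : (ZMod 2)[X]) (hdeg : ∀ i ∈ c.support, i < 2 * n)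
    (hc : c ≠ 0) (d0 : (X - 1) ^ 2 ∣ c) (d1 : (minpoly (ZMod 2) β) ^ 2 ∣ c)
    (d3 : minpoly (ZMod 2) (β ^ 3) ∣ c) (d5 : minpoly (ZMod 2) (β ^ 5) ∣ c) :
    8 ≤ c.support.card := by
  have : CharP K 2 := charP_of_injective_algebraMap (algebraMap (ZMod 2) K).injective 2
  have ev : ∀ (p : (ZMod 2)[X]) (x : K), aeval x p = 0 → p ^ 2 ∣ c →
      ∑ i ∈ c.support with Odd i, x ^ i = 0 ∧ ∑ i ∈ c.support with ¬ Odd i, x ^ i = 0 := by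
    rintro p x hx ⟨r, rfl⟩
    have h1 : ∑ i ∈ (p ^ 2 * r).support with Odd i, x ^ i = 0 := by
      rw [← aeval_deriv]; simp [derivative_mul, derivative_pow, hx]
    have h2 := aeval_sum (p ^ 2 * r) x
    rw [← Finset.sum_filter_add_sum_filter_not _ Odd, h1] at h2
    exact ⟨h1, by simpa [hx] using h2.symm⟩
  obtain ⟨o0, e0⟩ := ev _ 1 (by simp) d0
  obtain ⟨o1, e1⟩ := ev _ β (minpoly.aeval _ _) d1
  have s3 : ∑ i ∈ c.support, (β ^ 3) ^ i = 0 := by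
    rw [← aeval_sum]; obtain ⟨r, rfl⟩ := d3; simp
  have s5 : ∑ i ∈ c.support, (β ^ 5) ^ i = 0 := by
    rw [← aeval_sum]; obtain ⟨r, rfl⟩ := d5; simp
  have par : ∀ s : Finset ℕ, ∑ i ∈ s, (1 : K) ^ i = 0 → Even s.card := by
    intro s hs
    simp only [one_pow, Finset.sum_const, nsmul_eq_mul, mul_one] at hs
    exact even_iff_two_dvd.mpr ((CharP.cast_eq_zero_iff K 2 _).mp hs)
  have inj : ∀ i ∈ c.support, ∀ j ∈ c.support, (Odd i ↔ Odd j) → β ^ i = β ^ j → i = j := by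
    intro i hi j hj hij h
    have hi := hdeg i hi
    have hj := hdeg j hj
    have hm : i ≡ j [MOD n] := modEq_of_pow_eq hβ hn.pos h
    have h2 : i ≡ j [MOD 2] := by
      by_cases ho : Odd i
      · have := hij.mp ho
        rw [Nat.odd_iff] at *; simp [Nat.ModEq, *]
      · have := mt hij.mpr ho
        rw [Nat.not_odd_iff] at *; simp [Nat.ModEq, *]
    have hcop : Nat.Coprime 2 n := (Nat.coprime_two_left).mpr hn
    exact Nat.ModEq.eq_of_lt_of_lt
      ((Nat.modEq_and_modEq_iff_modEq_mul hcop).mp ⟨h2, hm⟩) hi hj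
  have io : Set.InjOn (fun i => β ^ i) ({i ∈ c.support | Odd i} : Finset ℕ) := by
    intro i hi j hj h
    rw [Finset.mem_coe, Finset.mem_filter] at hi hj
    exact inj i hi.1 j hj.1 (by simp [hi.2, hj.2]) h
  have ie : Set.InjOn (fun i => β ^ i) ({i ∈ c.support | ¬ Odd i} : Finset ℕ) := by
    intro i hi j hj h
    rw [Finset.mem_coe, Finset.mem_filter] at hi hj
    exact inj i hi.1 j hj.1 (by simp only [hi.2, hj.2]) h
  have hcard : ({i ∈ c.support | Odd i} : Finset ℕ).card +
      ({i ∈ c.support | ¬ Odd i} : Finset ℕ).card = c.support.card := by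
    convert Finset.card_filter_add_card_filter_not (s := c.support) Odd
  by_contra hlt
  by_cases hO : ({i ∈ c.support | Odd i} : Finset ℕ) = ∅
  · have hE : ({i ∈ c.support | ¬ Odd i} : Finset ℕ) = c.support := by
      have := Finset.filter_union_filter_not_eq Odd c.support
      rwa [hO, Finset.empty_union] at this
    rw [hE] at e0 e1 ie
    exact hc (support_eq_empty.mp (bch _ β ie (par _ e0) e1 s3 s5 (by omega)))
  by_cases hE : ({i ∈ c.support | ¬ Odd i} : Finset ℕ) = ∅
  · have hO : ({i ∈ c.support | Odd i} : Finset ℕ) = c.support := by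
      have := Finset.filter_union_filter_not_eq Odd c.support
      rwa [hE, Finset.union_empty] at this
    rw [hO] at o0 o1 io
    exact hc (support_eq_empty.mp (bch _ β io (par _ o0) o1 s3 s5 (by omega)))
  have := four_le _ β io (par _ o0) o1 hO
  have := four_le _ β ie (par _ e0) e1 hE
  omega

theorem mem_code {F : Type*} [Field F] (N : ℕ) (g : F[X]) (hg : g ∣ X ^ N - 1) (c : F[X]) :
    c ∈ cyclicCode F N g ↔ c ∈ degreeLT F N ∧ g ∣ c := by
  have : Ideal.span ({g, X ^ N - 1} : Set F[X]) = Ideal.span {g} := by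
    apply le_antisymm
    · rw [Ideal.span_le]
      rintro x (rfl | rfl)
      · exact Ideal.mem_span_singleton_self _
      · exact Ideal.mem_span_singleton.mpr hg
    · exact Ideal.span_mono (by simp)
  rw [cyclicCode, this]
  simp [Ideal.mem_span_singleton]

theorem dim_code {F : Type*} [Field F] (N : ℕ) (g : F[X]) (hg : g ∣ X ^ N - 1) (g0 : g ≠ 0) :
    Module.finrank F (cyclicCode F N g) = N - g.natDegree := by
  have : cyclicCode F N g =
      (degreeLT F (N - g.natDegree)).map (LinearMap.mulLeft F g) := by
    ext c
    rw [mem_code N g hg, Submodule.mem_map]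
    constructor
    · rintro ⟨h, r, rfl⟩
      refine ⟨r, ?_, rfl⟩
      rcases eq_or_ne r 0 with rfl | hr
      · exact zero_mem _
      rw [mem_degreeLT, degree_eq_natDegree (mul_ne_zero g0 hr), natDegree_mul g0 hr] at h
      rw [mem_degreeLT, degree_eq_natDegree hr]
      norm_cast at *
      omega
    · rintro ⟨r, h, rfl⟩
      refine ⟨?_, Dvd.intro _ rfl⟩
      rcases eq_or_ne r 0 with rfl | hr
      · simp
      rw [mem_degreeLT, degree_eq_natDegree hr] at h
      rw [LinearMap.mulLeft_apply, mem_degreeLT, degree_eq_natDegree (mul_ne_zero g0 hr),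
        natDegree_mul g0 hr]
      norm_cast at *
      omega
  rw [this]
  have hinj : Function.Injective (LinearMap.mulLeft F g) := fun a b h => mul_left_cancel₀ g0 h
  rw [← (Submodule.equivMapOfInjective _ hinj _).finrank_eq, (degreeLTEquiv F _).finrank_eq]
  simp

theorem exists_word {K : Type*} [Field K] [Fintype K] [Algebra (ZMod 2) K]
    (m : ℕ) (hm : 5 ≤ m) (n : ℕ) (hn : n = 3 * (2 ^ m - 1))
    (β : K) (hβ : IsPrimitiveRoot β n) :
    ∃ s : Finset ℕ, s.card = 4 ∧ (∀ i ∈ s, i < n) ∧ ∑ i ∈ s, β ^ i = 0 := by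
  have : CharP K 2 := charP_of_injective_algebraMap (algebraMap (ZMod 2) K).injective 2
  have hq : 2 ^ 5 ≤ 2 ^ m := Nat.pow_le_pow_right (by norm_num) hm
  have hθ : IsPrimitiveRoot (β ^ 3) (2 ^ m - 1) := hβ.pow (by omega) hn
  set θ := β ^ 3 with hθd
  have h2 : (1 + θ + θ ^ 2) ^ 2 ^ m = 1 + θ + θ ^ 2 := by
    rw [add_pow_char_pow, add_pow_char_pow, one_pow, pow_right_comm θ 2,
      (pow_eq_iff hθ (by omega) m).mpr dvd_rfl]
  have hne : 1 + θ + θ ^ 2 ≠ 0 := by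
    intro h
    have : θ ^ 3 = 1 := by
      have : θ ^ 3 - 1 = (θ - 1) * (1 + θ + θ ^ 2) := by ring
      rw [h, mul_zero, sub_eq_zero] at this; exact this
    have := Nat.le_of_dvd (by norm_num) ((hθ.pow_eq_one_iff_dvd 3).mp this)
    omega
  have h3 : (1 + θ + θ ^ 2) ^ n = 1 := by
    have h : (1 + θ + θ ^ 2) ^ (2 ^ m - 1) = 1 := by
      apply mul_right_cancel₀ hne
      rw [← pow_succ, Nat.sub_add_cancel Nat.one_le_two_pow, h2, one_mul]
    rw [hn, mul_comm, pow_mul, h, one_pow]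
  have : NeZero n := ⟨by omega⟩
  obtain ⟨k, hk, hkθ⟩ := hβ.eq_pow_of_pow_eq_one h3
  have hθ0 : θ ≠ 0 := hθ.ne_zero (by omega)
  have hp : ∀ j, 0 < j → j < 2 ^ m - 1 → θ ^ j ≠ 1 := fun j h1 h2 => hθ.pow_ne_one_of_pos_of_lt h1.ne' h2
  have hθ1 : θ ≠ 1 := by simpa using hp 1 (by norm_num) (by omega)
  have hθ2 : θ ^ 2 ≠ 1 := hp 2 (by norm_num) (by omega)
  have k0 : k ≠ 0 := by
    rintro rfl
    have h : θ * (1 + θ) = 0 := by linear_combination -hkθ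
    rcases mul_eq_zero.mp h with h | h
    · exact hθ0 h
    · exact hθ1 (CharTwo.add_eq_zero.mp h).symm
  have k3 : k ≠ 3 := by
    rintro rfl
    have h : 1 + θ ^ 2 = 0 := by rw [← hθd] at hkθ; linear_combination -hkθ
    exact hθ2 (CharTwo.add_eq_zero.mp h).symm
  have k6 : k ≠ 6 := by
    rintro rfl
    have h : 1 + θ = 0 := by
      have e : β ^ 6 = θ ^ 2 := by rw [hθd]; ring
      rw [e] at hkθ; linear_combination -hkθ
    exact hθ1 (CharTwo.add_eq_zero.mp h).symm
  refine ⟨{0, 3, 6, k}, ?_, ?_, ?_⟩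
  · rw [Finset.card_insert_of_notMem, Finset.card_insert_of_notMem, Finset.card_pair] <;>
      simp [k0.symm, k3.symm, k6.symm]
  · simp only [Finset.mem_insert, Finset.mem_singleton]
    rintro i (rfl | rfl | rfl | rfl) <;> omega
  · rw [Finset.sum_insert, Finset.sum_insert, Finset.sum_pair, hkθ]
    · have e : β ^ 6 = θ ^ 2 := by rw [hθd]; ring
      rw [e, pow_zero, ← hθd]
      rw [show 1 + (θ + (θ ^ 2 + (1 + θ + θ ^ 2))) = (1 + θ + θ ^ 2) + (1 + θ + θ ^ 2) by ring]
      exact CharTwo.add_self_eq_zero _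
    all_goals simp [k0.symm, k3.symm, k6.symm]

theorem upper {K : Type*} [Field K] [Fintype K] [Algebra (ZMod 2) K]
    (n : ℕ) (s : Finset ℕ) (β : K) (hs : s.card = 4) (hlt : ∀ i ∈ s, i < n)
    (h : ∑ i ∈ s, β ^ i = 0) :
    ∃ a : (ZMod 2)[X], (X - 1) ∣ a ∧ minpoly (ZMod 2) β ∣ a ∧
      a * (X ^ n - 1) ∈ degreeLT (ZMod 2) (2 * n) ∧ (a * (X ^ n - 1)).support.card = 8 := by
  set a : (ZMod 2)[X] := ∑ i ∈ s, X ^ i with ha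
  have hco : ∀ j, (a * (X ^ n - 1)).coeff j = if j ∈ s ∪ s.map (addRightEmbedding n) then 1 else 0 := by
    intro j
    have e : a * (X ^ n - 1) = a * X ^ n + a := by
      rw [mul_sub, mul_one, sub_eq_add_neg, CharTwo.neg_eq]
    rw [e, coeff_add, coeff_mul_X_pow', ha]
    simp only [finsetSum_coeff, coeff_X_pow, Finset.sum_ite_eq, Finset.mem_union, Finset.mem_map,
      addRightEmbedding_apply]
    by_cases hj : n ≤ j
    · have h1 : j ∉ s := fun h => by have := hlt j h; omega
      have h2 : (∃ x ∈ s, x + n = j) ↔ j - n ∈ s := by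
        constructor
        · rintro ⟨x, hx, rfl⟩; simpa using hx
        · intro h; exact ⟨_, h, by omega⟩
      simp [hj, h1, h2]
    · have h2 : ¬ (∃ x ∈ s, x + n = j) := by
        rintro ⟨x, hx, rfl⟩; omega
      simp [hj, h2]
  have hsup : (a * (X ^ n - 1)).support = s ∪ s.map (addRightEmbedding n) := by
    ext j; rw [mem_support_iff, hco]; simp; tauto
  refine ⟨a, ?_, ?_, ?_, ?_⟩
  · rw [← C_1, dvd_iff_isRoot, IsRoot, ha, eval_finsetSum]
    simp [hs]; decide
  · apply minpoly.dvd
    simpa [ha] using h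
  · rw [mem_degreeLT, degree_lt_iff_coeff_zero]
    intro j hj
    rw [hco, if_neg]
    simp only [Finset.mem_union, Finset.mem_map, addRightEmbedding_apply]
    rintro (h | ⟨x, hx, rfl⟩)
    · have := hlt j h; omega
    · have := hlt x hx; omega
  · rw [hsup, Finset.card_union_of_disjoint, Finset.card_map, hs]
    rw [Finset.disjoint_left]
    intro j hj
    simp only [Finset.mem_map, addRightEmbedding_apply]
    rintro ⟨x, hx, rfl⟩
    have := hlt _ hj; omega

end S13

/-- for odd `m ≥ 5`, `n = 3(2^m - 1)` and `β` a primitive `n`-th root of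
unity in `F_{2^{2m}}`, the repeated-root binary cyclic code of length `2n` with generator
polynomial `(x-1)^2 m_β(x)^2 m_{β³}(x) m_{β⁵}(x)` has dimension `6(2^m - 1) - 7m - 2`
and minimum distance exactly `8`. -/
theorem statement13 {K : Type*} [Field K] [Fintype K] [Algebra (ZMod 2) K]
    (m : ℕ) (hm : 5 ≤ m) (hmo : Odd m) (hK : Fintype.card K = 2 ^ (2 * m))
    (n : ℕ) (hn : n = 3 * (2 ^ m - 1))
    (β : K) (hβ : IsPrimitiveRoot β n) :
    Module.finrank (ZMod 2)
        (cyclicCode (ZMod 2) (2 * n)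
          ((X - 1) ^ 2 * (minpoly (ZMod 2) β) ^ 2 * minpoly (ZMod 2) (β ^ 3) *
            minpoly (ZMod 2) (β ^ 5))) =
      6 * (2 ^ m - 1) - 7 * m - 2 ∧
    minDist (cyclicCode (ZMod 2) (2 * n)
        ((X - 1) ^ 2 * (minpoly (ZMod 2) β) ^ 2 * minpoly (ZMod 2) (β ^ 3) *
          minpoly (ZMod 2) (β ^ 5))) = 8 := by
  subst hn
  obtain ⟨n, hn⟩ : ∃ n, n = 3 * (2 ^ m - 1) := ⟨_, rfl⟩
  rw [← hn] at hβ ⊢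
  have hq : 2 ^ 5 ≤ 2 ^ m := Nat.pow_le_pow_right (by norm_num) hm
  have hnodd : Odd n := by
    rw [hn]
    obtain ⟨k, rfl⟩ : ∃ k, m = k + 1 := ⟨m - 1, by omega⟩
    rw [pow_succ] at hq ⊢
    rw [Nat.odd_iff]; omega
  have hn0 : 0 < n := by omega
  have p3 : IsPrimitiveRoot (β ^ 3) (2 ^ m - 1) := hβ.pow hn0 hn
  have p5 : IsPrimitiveRoot (β ^ 5) n :=
    hβ.pow_of_coprime 5 (hn ▸ S13.coprime_five m hmo)
  have g1 := S13.deg_big m hm hK β (hn ▸ hβ)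
  have g5 := S13.deg_big m hm hK (β ^ 5) (hn ▸ p5)
  have g3 := S13.deg_small m hm (β ^ 3) p3
  have g0 : (X - 1 : (ZMod 2)[X]).natDegree = 1 := by
    rw [← C_1]; exact natDegree_X_sub_C _
  have int : ∀ x : K, IsIntegral (ZMod 2) x := fun x => IsIntegral.of_finite _ _
  have i0 : Irreducible (X - 1 : (ZMod 2)[X]) := by rw [← C_1]; exact irreducible_X_sub_C _
  have i1 := minpoly.irreducible (int β)
  have i3 := minpoly.irreducible (int (β ^ 3))
  have i5 := minpoly.irreducible (int (β ^ 5))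
  have n0 : (X - 1 : (ZMod 2)[X]).Monic := by rw [← C_1]; exact monic_X_sub_C _
  have n1 := minpoly.monic (int β)
  have n3 := minpoly.monic (int (β ^ 3))
  have n5 := minpoly.monic (int (β ^ 5))
  have h15 : minpoly (ZMod 2) β ≠ minpoly (ZMod 2) (β ^ 5) := by
    intro h
    obtain ⟨σ, hσ⟩ := (Normal.minpoly_eq_iff_mem_orbit K).mp h.symm
    obtain ⟨i, hi⟩ := FiniteField.exists_forall_apply_eq_pow (ZMod 2) 2 K σ
    have h2 : β ^ 5 = β ^ 2 ^ i := by
      rw [← hσ]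
      change σ β = _
      rw [hi]; simp
    have h3 : 5 ≡ 2 ^ i [MOD n] := S13.modEq_of_pow_eq hβ hn0 h2
    exact S13.five_ne m hm i (h3.of_dvd (hn ▸ Dvd.intro_left _ rfl))
  have cop : ∀ p q : (ZMod 2)[X], Irreducible p → Irreducible q → p.Monic → q.Monic → p ≠ q →
      IsCoprime p q := by
    intro p q hp hq hp1 hq1 hne
    rw [hp.coprime_iff_not_dvd]
    intro hd
    exact hne (eq_of_monic_of_associated hp1 hq1 (hp.associated_of_dvd hq hd))
  have c01 := cop _ _ i0 i1 n0 n1 (fun h => by rw [h] at g0; omega)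
  have c03 := cop _ _ i0 i3 n0 n3 (fun h => by rw [h] at g0; omega)
  have c05 := cop _ _ i0 i5 n0 n5 (fun h => by rw [h] at g0; omega)
  have c13 := cop _ _ i1 i3 n1 n3 (fun h => by rw [h] at g1; omega)
  have c15 := cop _ _ i1 i5 n1 n5 h15
  have c35 := cop _ _ i3 i5 n3 n5 (fun h => by rw [h] at g3; omega)
  have dv : ∀ j, minpoly (ZMod 2) (β ^ j) ∣ X ^ n - 1 := by
    intro j
    apply minpoly.dvd
    simp [pow_right_comm β j n, hβ.pow_eq_one]
  have dv0 : (X - 1 : (ZMod 2)[X]) ∣ X ^ n - 1 := by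
    simpa using sub_dvd_pow_sub_pow (X : (ZMod 2)[X]) 1 n
  have dv1 : minpoly (ZMod 2) β ∣ X ^ n - 1 := by simpa using dv 1
  have dP : (X - 1) * minpoly (ZMod 2) β * minpoly (ZMod 2) (β ^ 3) *
            minpoly (ZMod 2) (β ^ 5) ∣ X ^ n - 1 :=
    ((c05.mul_left c15).mul_left c35).mul_dvd
      ((c03.mul_left c13).mul_dvd (c01.mul_dvd dv0 dv1) (dv 3)) (dv 5)
  -- anything divisible by `(X-1) m_β` times `X^n-1` is divisible by `g`
  have key : ∀ a : (ZMod 2)[X], X - 1 ∣ a → minpoly (ZMod 2) β ∣ a →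
      ((X - 1) ^ 2 * (minpoly (ZMod 2) β) ^ 2 * minpoly (ZMod 2) (β ^ 3) *
            minpoly (ZMod 2) (β ^ 5)) ∣ a * (X ^ n - 1) := by
    intro a h0 h1
    refine dvd_trans (dvd_of_eq ?_) (mul_dvd_mul (c01.mul_dvd h0 h1) dP)
    ring
  have hg : ((X - 1) ^ 2 * (minpoly (ZMod 2) β) ^ 2 * minpoly (ZMod 2) (β ^ 3) *
            minpoly (ZMod 2) (β ^ 5)) ∣ X ^ (2 * n) - 1 := by
    have e : (X ^ (2 * n) - 1 : (ZMod 2)[X]) = (X ^ n - 1) * (X ^ n - 1) := by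
      have : (2 : (ZMod 2)[X]) = 0 := CharTwo.two_eq_zero
      linear_combination (X ^ n - 1) * this
    rw [e]
    exact key _ dv0 dv1
  have gm : ((X - 1) ^ 2 * (minpoly (ZMod 2) β) ^ 2 * minpoly (ZMod 2) (β ^ 3) *
            minpoly (ZMod 2) (β ^ 5)).Monic := (((n0.pow 2).mul (n1.pow 2)).mul n3).mul n5
  constructor
  · rw [S13.dim_code _ _ hg gm.ne_zero, (((n0.pow 2).mul (n1.pow 2)).mul n3).natDegree_mul n5,
      ((n0.pow 2).mul (n1.pow 2)).natDegree_mul n3, (n0.pow 2).natDegree_mul (n1.pow 2),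
      n0.natDegree_pow, n1.natDegree_pow, g0, g1, g3, g5]
    omega
  · obtain ⟨s, hs, hslt, hsum⟩ := S13.exists_word m hm n hn β hβ
    obtain ⟨a, a0, a1, ad, ac⟩ := S13.upper n s β hs hslt hsum
    apply le_antisymm
    · apply Nat.sInf_le
      refine ⟨a * (X ^ n - 1), (S13.mem_code _ _ hg _).mpr ⟨ad, key a a0 a1⟩, ?_, ac⟩
      intro h
      rw [h] at ac; simp at ac
    · apply le_csInf
      · refine ⟨8, a * (X ^ n - 1), (S13.mem_code _ _ hg _).mpr ⟨ad, key a a0 a1⟩, ?_, ac⟩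
        intro h
        rw [h] at ac; simp at ac
      · rintro w ⟨c, hc, hc0, rfl⟩
        obtain ⟨hd, hgc⟩ := (S13.mem_code _ _ hg _).mp hc
        refine S13.lower n hnodd β hβ c ?_ hc0 ?_ ?_ ?_ ?_
        · intro i hi
          by_contra hge
          rw [mem_degreeLT, degree_lt_iff_coeff_zero] at hd
          exact (mem_support_iff.mp hi) (hd i (by omega))
        · exact dvd_trans (((Dvd.intro _ rfl).mul_right _).mul_right _) hgc
        · exact dvd_trans (((Dvd.intro_left _ rfl).mul_right _).mul_right _) hgc
        · exact dvd_trans ((Dvd.intro_left _ rfl).mul_right _) hgc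
        · exact dvd_trans (Dvd.intro_left _ rfl) hgc
end

section
/- Let m ≥ 3 be a prime, n = 2^m − 1, and h = (2^{m−1} − 1)/m (an integer by Fermat's little theorem). For a ∈ {1, …, n − 1}, the 2-cyclotomic coset of a modulo n is {a·2^i mod n : i ≥ 0}, and its coset leader is its least element; let δ_1 < δ_2 < ⋯ be the distinct coset leaders of the nonzero 2-cyclotomic cosets modulo n, listed in increasing order. Let β be a primitive element of F_{2^m} and let g(x) = lcm(m_β(x), m_{β^2}(x), …, m_{β^{δ_h + 1}}(x)), the generator polynomial of the BCH code C_{(2,n,δ_h+2,1)}. Then the cyclic code of length 2n over F_2 with generator polynomial (x−1)·g(x)^2 has dimension n and minimum distance d satisfying d ≥ δ_h + 3 ≥ (n − 1 + 2m)/m. -/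
open Polynomial

/-- The set of coset leaders of the nonzero `2`-cyclotomic cosets modulo `n`:
`a ∈ {1, …, n-1}` is a coset leader iff it is the least element of its coset
`{a·2^i mod n : i ≥ 0}`. -/
def cosetLeaders (n : ℕ) : Set ℕ :=
  {a | 0 < a ∧ a < n ∧ ∀ i : ℕ, a ≤ a * 2 ^ i % n}

/-- `δ` is the `h`-th smallest coset leader (i.e. `δ = δ_h` where
`δ_1 < δ_2 < ⋯` lists the coset leaders in increasing order). -/
def IsNthSmallestLeader (n h δ : ℕ) : Prop :=
  δ ∈ cosetLeaders n ∧ {a ∈ cosetLeaders n | a ≤ δ}.ncard = h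


theorem bch_bound {F K : Type*} [Field F] [Field K] [Algebra F K] (n b D : ℕ) (β : K)
    (hβ : IsPrimitiveRoot β n) (hn : 0 < n) (c : F[X]) (hc : c ≠ 0) (hdeg : ∀ i, n ≤ i → c.coeff i = 0)
    (hr : ∀ j < D, aeval (β ^ (b + j)) c = 0) : D < c.support.card := by
  by_contra hlt
  push Not at hlt
  set w := c.support.card with hw
  let e := c.support.equivFin.symm
  have hβ0 : β ≠ 0 := hβ.ne_zero hn.ne'
  have hinj : Function.Injective (fun k : Fin w => β ^ ((e k : ℕ))) := by
    intro k l hkl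
    have hk : ∀ k : Fin w, (e k : ℕ) < n := by
      intro k
      by_contra hh
      have := (e k).2
      rw [mem_support_iff] at this
      exact this (hdeg _ (by omega))
    have := hβ.pow_inj (hk k) (hk l) hkl
    exact e.injective (Subtype.ext this)
  have hz := Matrix.eq_zero_of_forall_pow_sum_mul_pow_eq_zero (f := fun k : Fin w => β ^ ((e k : ℕ)))
    (v := fun k => algebraMap F K (c.coeff (e k)) * β ^ (b * (e k : ℕ))) hinj (by
      intro i
      have h1 := hr i (lt_of_lt_of_le i.2 hlt)
      rw [aeval_eq_sum_range' (n := c.natDegree + 1) (by omega)] at h1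
      rw [← aeval_eq_sum_range' (n := c.natDegree + 1) (by omega), aeval_def, eval₂_eq_sum, Polynomial.sum] at h1
      rw [← Finset.sum_coe_sort, ← Equiv.sum_comp e] at h1
      rw [← h1]
      refine Finset.sum_congr rfl fun k _ => ?_
      rw [mul_assoc]
      congr 1
      rw [← pow_mul, ← pow_mul, ← pow_add]
      congr 1
      ring)
  have hpos : 0 < w := by
    rw [hw, Finset.card_pos]
    exact nonempty_support_iff.mpr hc
  have := congrFun hz ⟨0, hpos⟩
  simp only [Pi.zero_apply, mul_eq_zero, pow_eq_zero_iff', hβ0, false_and, or_false] at this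
  have h2 := (e ⟨0, hpos⟩).2
  rw [mem_support_iff] at h2
  exact h2 (by simpa using this)

theorem even_odd_split {F : Type*} [Field F] (q : F[X]) :
    ∃ q0 q1 : F[X], q = expand F 2 q0 + X * expand F 2 q1 := by
  refine ⟨contract 2 q, contract 2 (divX q), ?_⟩
  ext i
  rcases Nat.even_or_odd' i with ⟨k, rfl | rfl⟩
  · rcases k with _ | k
    · simp [coeff_expand, coeff_contract]
    · have : 2 * (k + 1) = (2 * k + 1) + 1 := by ring
      rw [coeff_add, coeff_expand (by norm_num), if_pos (by omega), coeff_contract (by norm_num), this,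
        coeff_X_mul, coeff_expand (by norm_num), if_neg (by omega), add_zero]
      congr 1
      omega
  · rw [coeff_add, coeff_expand (by norm_num), if_neg (by omega), coeff_X_mul,
      coeff_expand (by norm_num), if_pos (by omega), coeff_contract (by norm_num), coeff_divX, zero_add]
    congr 1
    omega

theorem coeff_split_even {F : Type*} [Field F] (a b : F[X]) (i : ℕ) :
    (expand F 2 a + X * expand F 2 b).coeff (2 * i) = a.coeff i := by
  rw [coeff_add, coeff_expand (by norm_num), if_pos (by omega)]
  rcases i with _ | k
  · simp
  · have : 2 * (k + 1) = (2 * k + 1) + 1 := by ring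
    rw [this, coeff_X_mul, coeff_expand (by norm_num), if_neg (by omega), add_zero]
    congr 1
    omega

theorem coeff_split_odd {F : Type*} [Field F] (a b : F[X]) (i : ℕ) :
    (expand F 2 a + X * expand F 2 b).coeff (2 * i + 1) = b.coeff i := by
  rw [coeff_add, coeff_expand (by norm_num), if_neg (by omega), coeff_X_mul,
      coeff_expand (by norm_num), if_pos (by omega), zero_add]
  congr 1
  omega

theorem card_split {F : Type*} [Field F] (a b : F[X]) :
    a.support.card + b.support.card ≤ (expand F 2 a + X * expand F 2 b).support.card := by
  classical
  rw [← Finset.card_image_of_injective a.support (f := fun i => 2 * i) (fun x y h => by simpa using h),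
    ← Finset.card_image_of_injective b.support (f := fun i => 2 * i + 1) (fun x y h => by simpa using h),
    ← Finset.card_union_of_disjoint]
  · apply Finset.card_le_card
    intro x hx
    rw [Finset.mem_union, Finset.mem_image, Finset.mem_image] at hx
    rcases hx with ⟨i, hi, rfl⟩ | ⟨i, hi, rfl⟩
    · rw [mem_support_iff] at hi ⊢
      rwa [coeff_split_even]
    · rw [mem_support_iff] at hi ⊢
      rwa [coeff_split_odd]
  · rw [Finset.disjoint_left]
    intro x hx hy
    rw [Finset.mem_image] at hx hy
    obtain ⟨i, _, rfl⟩ := hx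
    obtain ⟨j, _, hj⟩ := hy
    omega

theorem mem_cyclic {F : Type*} [Field F] (N : ℕ) (G : F[X]) (hG : G ∣ X ^ N - 1) (c : F[X]) :
    c ∈ cyclicCode F N G ↔ c.degree < N ∧ G ∣ c := by
  have : Ideal.span ({G, X ^ N - 1} : Set F[X]) = Ideal.span {G} := by
    apply le_antisymm
    · rw [Ideal.span_le]
      rintro x (rfl | rfl)
      · exact Ideal.subset_span rfl
      · exact Ideal.mem_span_singleton.mpr hG
    · exact Ideal.span_mono (by simp)
  rw [cyclicCode, Submodule.mem_inf, mem_degreeLT, Submodule.restrictScalars_mem, this,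
    Ideal.mem_span_singleton]

theorem finrank_cyclic {F : Type*} [Field F] (N k : ℕ) (G : F[X]) (hG : G ∣ X ^ N - 1)
    (hG0 : G ≠ 0) (hN : N = k + G.natDegree) :
    Module.finrank F (cyclicCode F N G) = k := by
  have hinj : Function.Injective (LinearMap.mulLeft F G) := by
    intro x y hxy
    exact mul_left_cancel₀ hG0 hxy
  have : cyclicCode F N G = (degreeLT F k).map (LinearMap.mulLeft F G) := by
    ext c
    rw [mem_cyclic N G hG, Submodule.mem_map]
    have key : ∀ x : F[X], (G * x).degree < (N : WithBot ℕ) ↔ x.degree < (k : WithBot ℕ) := by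
      intro x
      by_cases hx : x = 0
      · simp [hx]
      · rw [← natDegree_lt_iff_degree_lt hx, ← natDegree_lt_iff_degree_lt (mul_ne_zero hG0 hx),
          natDegree_mul hG0 hx]
        omega
    constructor
    · rintro ⟨h1, x, rfl⟩
      exact ⟨x, mem_degreeLT.mpr ((key x).mp h1), rfl⟩
    · rintro ⟨x, hx, rfl⟩
      exact ⟨(key x).mpr (mem_degreeLT.mp hx), dvd_mul_right _ _⟩
  rw [this, ← ((degreeLTEquiv F k).symm.trans
    (Submodule.equivMapOfInjective _ hinj (degreeLT F k))).finrank_eq]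
  simp

theorem mod_pow_eq {n a i : ℕ} {K : Type*} [Field K] {β : K} (hβ : β ^ n = 1) :
    β ^ (a * 2 ^ i % n) = (β ^ a) ^ 2 ^ i := by
  rw [← pow_mul]
  conv_rhs => rw [← Nat.mod_add_div (a * 2 ^ i) n, pow_add, pow_mul, hβ, one_pow, mul_one]

section
variable {K : Type*} [Field K] [Fintype K] [Algebra (ZMod 2) K]

theorem frob_pow (i : ℕ) (x : K) :
    ((FiniteField.frobeniusAlgEquivOfAlgebraic (ZMod 2) K) ^ i) x = x ^ 2 ^ i := by
  induction i with
  | zero => simp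
  | succ i ih => rw [pow_succ', AlgEquiv.mul_apply, ih, FiniteField.frobeniusAlgEquivOfAlgebraic_apply,
      ZMod.card, ← pow_mul, pow_succ]

theorem minpoly_frob (i : ℕ) (x : K) : minpoly (ZMod 2) (x ^ 2 ^ i) = minpoly (ZMod 2) x := by
  rw [← frob_pow, minpoly.algEquiv_eq]

theorem minpoly_eq_frob (x y : K) (h : minpoly (ZMod 2) x = minpoly (ZMod 2) y) :
    ∃ i : ℕ, x = y ^ 2 ^ i := by
  obtain ⟨σ, hσ⟩ := (isConjRoot_iff_exists_algEquiv (K := ZMod 2)).mp h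
  obtain ⟨i, hi⟩ := (FiniteField.bijective_frobeniusAlgEquivOfAlgebraic_pow (ZMod 2) K).2 σ
  refine ⟨i, ?_⟩
  rw [← hσ, ← hi, frob_pow]

theorem minpoly_coprime (x y : K) (h : minpoly (ZMod 2) x ≠ minpoly (ZMod 2) y) :
    IsCoprime (minpoly (ZMod 2) x) (minpoly (ZMod 2) y) := by
  have hx := Algebra.IsIntegral.isIntegral (R := ZMod 2) x
  have hy := Algebra.IsIntegral.isIntegral (R := ZMod 2) y
  rw [(minpoly.irreducible hx).coprime_iff_not_dvd]
  intro hd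
  exact h (eq_of_monic_of_associated (minpoly.monic hx) (minpoly.monic hy)
    ((minpoly.irreducible hx).associated_of_dvd (minpoly.irreducible hy) hd))

theorem minpoly_deg (m : ℕ) (hmp : m.Prime) (hK : Fintype.card K = 2 ^ m) (x : K) (h0 : x ≠ 0)
    (h1 : x ≠ 1) : (minpoly (ZMod 2) x).natDegree = m := by
  have hx := Algebra.IsIntegral.isIntegral (R := ZMod 2) x
  have hf : Module.finrank (ZMod 2) K = m := by
    have := Module.card_eq_pow_finrank (K := ZMod 2) (V := K)
    rw [hK, ZMod.card] at this
    exact (Nat.pow_right_injective le_rfl this).symm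
  have := minpoly.degree_dvd hx
  rw [hf] at this
  rcases (Nat.dvd_prime hmp).mp this with h | h
  · exfalso
    have hd : (minpoly (ZMod 2) x).degree = 1 := by
      rw [degree_eq_natDegree (minpoly.ne_zero hx), h]; rfl
    obtain ⟨a, ha⟩ := minpoly.mem_range_of_degree_eq_one (ZMod 2) x hd
    fin_cases a
    · exact h0 (by rw [← ha]; exact map_zero _)
    · exact h1 (by rw [← ha]; exact map_one _)
  · exact h

end

theorem leader_odd {m n a : ℕ} (hm : 3 ≤ m) (hn : n = 2 ^ m - 1) (ha : a ∈ cosetLeaders n) :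
    a % 2 = 1 := by
  obtain ⟨h0, h1, h2⟩ := ha
  by_contra hodd
  obtain ⟨b, rfl⟩ : ∃ b, a = 2 * b := ⟨a / 2, by omega⟩
  have h3 := h2 (m - 1)
  have hpos : 0 < 2 ^ m := by positivity
  have : 2 * b * 2 ^ (m - 1) = b + n * b := by
    have h5 : 2 ^ m = 2 * 2 ^ (m - 1) := by
      rw [← pow_succ']; congr 1; omega
    have : 2 ^ m = n + 1 := by omega
    calc 2 * b * 2 ^ (m - 1) = b * (2 * 2 ^ (m - 1)) := by ring
      _ = b * (n + 1) := by rw [← h5, this]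
      _ = _ := by ring
  rw [this, Nat.add_mul_mod_self_left, Nat.mod_eq_of_lt (by omega)] at h3
  omega

theorem exists_leader {m n j : ℕ} (hm : 3 ≤ m) (hn : n = 2 ^ m - 1) (hj0 : 0 < j) (hj : j < n) :
    ∃ a ∈ cosetLeaders n, a ≤ j ∧ ∃ i, a = j * 2 ^ i % n := by
  classical
  have hex : ∃ a, ∃ i, a = j * 2 ^ i % n := ⟨_, 0, rfl⟩
  obtain ⟨i, hi⟩ := Nat.find_spec hex
  have hmin := fun b hb => Nat.find_min' hex (m := b) hb
  set a := Nat.find hex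
  refine ⟨a, ⟨?_, ?_, ?_⟩, ?_, i, hi⟩
  · rw [hi, Nat.pos_iff_ne_zero]
    intro h
    have hd := Nat.dvd_of_mod_eq_zero h
    have hodd : Nat.Coprime n (2 ^ i) := by
      apply Nat.Coprime.pow_right
      rw [Nat.coprime_two_right, Nat.odd_iff]
      have h5 : 2 ^ m = 2 * 2 ^ (m - 1) := by
        rw [← pow_succ']; congr 1; omega
      have : 0 < 2 ^ (m - 1) := by positivity
      omega
    have := Nat.le_of_dvd hj0 (hodd.dvd_of_dvd_mul_right hd)
    omega
  · rw [hi]; exact Nat.mod_lt _ (by omega)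
  · intro k
    apply hmin
    refine ⟨i + k, ?_⟩
    rw [hi, Nat.mod_mul_mod, pow_add, mul_assoc]
  · apply hmin
    exact ⟨0, by rw [pow_zero, mul_one, Nat.mod_eq_of_lt hj]⟩

theorem g_facts {K : Type*} [Field K] [Fintype K] [Algebra (ZMod 2) K]
    (m : ℕ) (hm : 3 ≤ m) (hmp : m.Prime) (hK : Fintype.card K = 2 ^ m)
    (n : ℕ) (hn : n = 2 ^ m - 1)
    (h : ℕ)
    (β : K) (hβ : IsPrimitiveRoot β n)
    (δ : ℕ) (hδ : IsNthSmallestLeader n h δ)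
    (g : Polynomial (ZMod 2))
    (hg : g = (Finset.Icc 1 (δ + 1)).lcm fun j => minpoly (ZMod 2) (β ^ j)) :
    g ≠ 0 ∧ g.natDegree = h * m ∧ (X - 1) * g ∣ X ^ n - 1 := by
  classical
  have h5 : 2 ^ m = 2 * 2 ^ (m - 1) := by
    rw [← pow_succ']; congr 1; omega
  have h6 : 0 < 2 ^ (m - 1) := by positivity
  have hn0 : 0 < n := by omega
  have hβ0 : β ≠ 0 := hβ.ne_zero hn0.ne'
  have hβn : β ^ n = 1 := hβ.pow_eq_one
  have hδodd := leader_odd hm hn hδ.1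
  have hδn : δ + 1 < n := by
    have := hδ.1.2.1
    omega
  have hint : ∀ x : K, IsIntegral (ZMod 2) x := fun x => Algebra.IsIntegral.isIntegral x
  have hfin : {a ∈ cosetLeaders n | a ≤ δ}.Finite :=
    (Set.finite_Iic δ).subset (fun a ha => ha.2)
  set L := hfin.toFinset with hL
  have hLc : L.card = h := by
    rw [hL, ← Set.ncard_eq_toFinset_card _ hfin]; exact hδ.2
  have memL : ∀ a, a ∈ L ↔ a ∈ cosetLeaders n ∧ a ≤ δ := by
    intro a; rw [hL, Set.Finite.mem_toFinset]; rfl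
  set P : ℕ → (ZMod 2)[X] := fun j => minpoly (ZMod 2) (β ^ j) with hP
  have hne1 : ∀ j, 0 < j → j < n → β ^ j ≠ 1 := by
    intro j hj0 hj hj1
    have := Nat.le_of_dvd hj0 (hβ.dvd_of_pow_eq_one j hj1)
    omega
  have hdegP : ∀ j, 0 < j → j < n → (P j).natDegree = m := fun j hj0 hj =>
    minpoly_deg m hmp hK _ (pow_ne_zero _ hβ0) (hne1 j hj0 hj)
  have hle : ∀ a ∈ cosetLeaders n, ∀ b ∈ cosetLeaders n, P a = P b → b ≤ a := by
    intro a ha b hb hab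
    obtain ⟨i, hi⟩ := minpoly_eq_frob _ _ hab
    rw [← mod_pow_eq hβn] at hi
    rw [hβ.pow_inj ha.2.1 (Nat.mod_lt _ hn0) hi]
    exact hb.2.2 i
  have hpair : (L : Set ℕ).Pairwise (Function.onFun IsCoprime P) := by
    intro a ha b hb hab
    have ha' := ((memL a).mp ha).1
    have hb' := ((memL b).mp hb).1
    apply minpoly_coprime
    intro heq
    exact hab (le_antisymm (hle b hb' a ha' heq.symm) (hle a ha' b hb' heq))
  have hass : Associated g (∏ a ∈ L, P a) := by
    apply associated_of_dvd_dvd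
    · rw [hg]
      apply Finset.lcm_dvd
      intro j hj
      rw [Finset.mem_Icc] at hj
      obtain ⟨a, ha, haj, i, hi⟩ := exists_leader hm hn (j := j) (by omega) (by omega)
      have hodd := leader_odd hm hn ha
      have : P j = P a := by
        simp only [hP]
        rw [hi, mod_pow_eq hβn, minpoly_frob]
      show P j ∣ _
      rw [this]
      exact Finset.dvd_prod_of_mem P ((memL a).mpr ⟨ha, by omega⟩)
    · apply Finset.prod_dvd_of_coprime hpair
      intro a ha
      obtain ⟨h1, h2⟩ := (memL a).mp ha
      rw [hg]
      exact Finset.dvd_lcm (f := P) (Finset.mem_Icc.mpr ⟨h1.1, by omega⟩)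
  have hmon : (∏ a ∈ L, P a).Monic := monic_prod_of_monic _ _ fun a _ => minpoly.monic (hint _)
  have hg0 : g ≠ 0 := hass.ne_zero_iff.mpr hmon.ne_zero
  refine ⟨hg0, ?_, ?_⟩
  · rw [natDegree_eq_of_degree_eq (degree_eq_degree_of_associated hass),
      natDegree_prod_of_monic _ _ fun a _ => minpoly.monic (hint _), Finset.sum_congr rfl
      (g := fun _ => m) (fun a ha => ?_), Finset.sum_const, hLc, smul_eq_mul]
    have := ((memL a).mp ha).1
    exact hdegP a this.1 this.2.1
  · rw [(hass.mul_left (X - 1)).dvd_iff_dvd_left]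
    have hone : (X - 1 : (ZMod 2)[X]) = minpoly (ZMod 2) (1 : K) := (minpoly.one _ _).symm
    apply IsCoprime.mul_dvd
    · apply IsCoprime.prod_right
      intro a ha
      have h1 := ((memL a).mp ha).1
      rw [hone]
      apply minpoly_coprime
      intro heq
      have h2 := hdegP a h1.1 h1.2.1
      simp only [hP] at h2
      rw [← heq, ← hone] at h2
      have : (X - 1 : (ZMod 2)[X]).natDegree = 1 := by
        simpa using natDegree_X_sub_C (1 : ZMod 2)
      omega
    · exact sub_one_dvd_pow_sub_one X n
    · apply Finset.prod_dvd_of_coprime hpair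
      intro a _
      apply minpoly.dvd
      simp [← pow_mul, mul_comm a n, pow_mul β n, hβn]

/-- for a prime `m ≥ 3`, `n = 2^m - 1`, `h = (2^{m-1} - 1)/m`, `δ_h` the
`h`-th smallest nonzero `2`-cyclotomic coset leader mod `n`, and
`g = lcm(m_β, m_{β²}, …, m_{β^{δ_h + 1}})` the generator polynomial of the BCH code
`C_{(2,n,δ_h+2,1)}` (with `β` a primitive element of `F_{2^m}`), the repeated-root
binary cyclic code of length `2n` with generator polynomial `(x-1) g(x)^2` has
dimension `n` and minimum distance `d ≥ δ_h + 3 ≥ (n - 1 + 2m)/m`. -/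
theorem statement18 {K : Type*} [Field K] [Fintype K] [Algebra (ZMod 2) K]
    (m : ℕ) (hm : 3 ≤ m) (hmp : m.Prime) (hK : Fintype.card K = 2 ^ m)
    (n : ℕ) (hn : n = 2 ^ m - 1)
    (h : ℕ) (hh : m * h = 2 ^ (m - 1) - 1)
    (β : K) (hβ : IsPrimitiveRoot β (2 ^ m - 1))
    (δ : ℕ) (hδ : IsNthSmallestLeader n h δ)
    (g : Polynomial (ZMod 2))
    (hg : g = (Finset.Icc 1 (δ + 1)).lcm fun j => minpoly (ZMod 2) (β ^ j)) :
    Module.finrank (ZMod 2) (cyclicCode (ZMod 2) (2 * n) ((X - 1) * g ^ 2)) = n ∧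
    (n - 1 + 2 * m) / m ≤ δ + 3 ∧
    δ + 3 ≤ minDist (cyclicCode (ZMod 2) (2 * n) ((X - 1) * g ^ 2)) := by
  rw [← hn] at hβ
  have h5 : 2 ^ m = 2 * 2 ^ (m - 1) := by
    rw [← pow_succ']; congr 1; omega
  have h6 : 0 < 2 ^ (m - 1) := by positivity
  have h7 : n = 2 * (m * h) + 1 := by omega
  have hn0 : 0 < n := by omega
  have hβn : β ^ n = 1 := hβ.pow_eq_one
  have hδodd := leader_odd hm hn hδ.1
  obtain ⟨hg0, hgdeg, hgdvd⟩ := g_facts m hm hmp hK n hn h β hβ δ hδ g hg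
  have hX1 : (X - 1 : (ZMod 2)[X]) ≠ 0 := by
    simpa using X_sub_C_ne_zero (1 : ZMod 2)
  have hX1d : (X - 1 : (ZMod 2)[X]).natDegree = 1 := by
    simpa using natDegree_X_sub_C (1 : ZMod 2)
  have hG0 : (X - 1) * g ^ 2 ≠ 0 := mul_ne_zero hX1 (pow_ne_zero _ hg0)
  have hGd : ((X - 1) * g ^ 2).natDegree = n := by
    rw [natDegree_mul hX1 (pow_ne_zero _ hg0), natDegree_pow, hX1d, hgdeg, h7]
    ring
  have hGdvd : (X - 1) * g ^ 2 ∣ X ^ (2 * n) - 1 := by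
    have h1 : (X ^ (2 * n) - 1 : (ZMod 2)[X]) = (X ^ n - 1) * (X ^ n + 1) := by ring
    have h2 : (X ^ n + 1 : (ZMod 2)[X]) = X ^ n - 1 := (CharTwo.sub_eq_add _ _).symm
    rw [h1, h2, sq, ← mul_assoc]
    exact mul_dvd_mul hgdvd ((dvd_mul_left _ _).trans hgdvd)
  have hdim := finrank_cyclic (2 * n) n _ hGdvd hG0 (by rw [hGd]; ring)
  refine ⟨hdim, ?_, ?_⟩
  · have hcount : h ≤ (δ + 1) / 2 := by
      rw [← hδ.2]
      calc _ ≤ ((fun k => 2 * k + 1) '' (Finset.range ((δ + 1) / 2) : Set ℕ)).ncard := by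
            apply Set.ncard_le_ncard
            · rintro a ⟨ha, hle⟩
              have := leader_odd hm hn ha
              exact ⟨a / 2, by simp; omega, by simp; omega⟩
            · exact (Finset.finite_toSet _).image _
        _ ≤ (Finset.range ((δ + 1) / 2) : Set ℕ).ncard := Set.ncard_image_le (Finset.finite_toSet _)
        _ = _ := by rw [Set.ncard_coe_finset, Finset.card_range]
    have : n - 1 + 2 * m = m * (2 * h + 2) := by
      have : n - 1 = 2 * (m * h) := by omega
      rw [this]; ring
    rw [this, Nat.mul_div_cancel_left _ (by omega)]
    omega
  · apply le_csInf
    · have hnt : cyclicCode (ZMod 2) (2 * n) ((X - 1) * g ^ 2) ≠ ⊥ := by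
        intro hb
        rw [hb, finrank_bot] at hdim
        omega
      obtain ⟨c, hc, hc0⟩ := Submodule.exists_mem_ne_zero_of_ne_bot hnt
      exact ⟨_, c, hc, hc0, rfl⟩
    · rintro w ⟨c, hc, hc0, rfl⟩
      rw [mem_cyclic _ _ hGdvd] at hc
      obtain ⟨hcd, q, hq⟩ := hc
      obtain ⟨q0, q1, hq01⟩ := even_odd_split ((X - 1) * q)
      have hcs : c = expand (ZMod 2) 2 (g * q0) + X * expand (ZMod 2) 2 (g * q1) := by
        rw [map_mul, map_mul, ZMod.expand_card g]
        calc c = g ^ 2 * ((X - 1) * q) := by rw [hq]; ring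
          _ = _ := by rw [hq01]; ring
      have hgroot : ∀ j, 1 ≤ j → j ≤ δ + 1 → aeval (β ^ j) g = 0 := by
        intro j h1 h2
        have hd : minpoly (ZMod 2) (β ^ j) ∣ g := by
          rw [hg]
          exact Finset.dvd_lcm (f := fun j => minpoly (ZMod 2) (β ^ j)) (Finset.mem_Icc.mpr ⟨h1, h2⟩)
        obtain ⟨r, hr⟩ := hd
        rw [hr, map_mul, minpoly.aeval, zero_mul]
      have hce : eval 1 (g * q0) + eval 1 (g * q1) = 0 := by
        have h1 : eval 1 c = 0 := by rw [hq]; simp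
        rw [hcs] at h1
        simpa [expand_eval] using h1
      have hcoef : ∀ i, 2 * n ≤ i → c.coeff i = 0 := by
        intro i hi
        apply coeff_eq_zero_of_degree_lt
        exact lt_of_lt_of_le hcd (by exact_mod_cast hi)
      have hd0 : ∀ i, n ≤ i → (g * q0).coeff i = 0 := by
        intro i hi
        rw [← coeff_split_even (g * q0) (g * q1), ← hcs]
        exact hcoef _ (by omega)
      have hd1 : ∀ i, n ≤ i → (g * q1).coeff i = 0 := by
        intro i hi
        rw [← coeff_split_odd (g * q0) (g * q1), ← hcs]
        exact hcoef _ (by omega)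
      have hw := card_split (g * q0) (g * q1)
      rw [← hcs] at hw
      have hA : ∀ r : (ZMod 2)[X], g * r ≠ 0 → (∀ i, n ≤ i → (g * r).coeff i = 0) →
          δ + 1 < (g * r).support.card := by
        intro r hr hrd
        apply bch_bound n 1 (δ + 1) β hβ hn0 _ hr hrd
        intro j hj
        rw [map_mul, hgroot _ (by omega) (by omega), zero_mul]
      have hB : ∀ r : (ZMod 2)[X], g * r ≠ 0 → (∀ i, n ≤ i → (g * r).coeff i = 0) →
          eval 1 (g * r) = 0 → δ + 2 < (g * r).support.card := by
        intro r hr hrd he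
        apply bch_bound n 0 (δ + 2) β hβ hn0 _ hr hrd
        intro j hj
        rcases j with _ | j
        · have := aeval_algebraMap_apply_eq_algebraMap_eval (A := K) (1 : ZMod 2) (g * r)
          rw [map_one, he, map_zero] at this
          simpa using this
        · rw [map_mul, hgroot _ (by omega) (by omega), zero_mul]
      by_cases hz0 : g * q0 = 0
      · by_cases hz1 : g * q1 = 0
        · exfalso
          apply hc0
          rw [hcs, hz0, hz1]; simp
        · have := hB q1 hz1 hd1 (by rw [hz0] at hce; simpa using hce)
          omega
      · by_cases hz1 : g * q1 = 0
        · have := hB q0 hz0 hd0 (by rw [hz1] at hce; simpa using hce)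
          omega
        · have := hA q0 hz0 hd0
          have := hA q1 hz1 hd1
          omega
end
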